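/- There exist a constant c > 0 and a real number X₀ such that for all real X ≥ X₀, the number of negative squarefree integers d such that the absolute value of the discriminant of the imaginary quadratic field ℚ(√d) is at most X and the ideal class group Cl(ℚ(√d)) contains a subgroup isomorphic to (ℤ/5ℤ)² is at least c · X^(1/4). -/

import Mathlib

open NumberField

/-- `d` is a negative squarefree integer such that the imaginary quadratic field
`ℚ(√d)` (characterized as a degree-2 number field containing a square root of `d`)
has `|discriminant| ≤ X` and its ideal class group contains a subgroup isomorphic
to `(ℤ/5ℤ)²`. -/
def GoodRank5sq (X : ℝ) (d : ℤ) : Prop :=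
  d < 0 ∧ Squarefree d ∧
  ∀ (K : Type) [Field K] [NumberField K],
    (∃ x : K, x * x = (d : K)) → Module.finrank ℚ K = 2 →
      (|NumberField.discr K| : ℝ) ≤ X ∧
      ∃ f : Multiplicative (ZMod 5 × ZMod 5) →* ClassGroup (𝓞 K), Function.Injective f

/-!
For integers `u`, `v` there is an identity `X² - D Y² = Z¹⁰` in which `D = D(u, v)` is symmetric.
With `K = ℚ(√D)`, the elements `X + Y √D` for `(u, v)` and for `(v, u)` both lie in `K`. If they
are coprime to their conjugates, they generate fifth powers of ideals `I` and `J`. Since `D < 0`,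
every unit is a fifth power, so a relation `I ^ i * J ^ j ∼ 1` makes the corresponding product of
elements a fifth power in `𝓞 K`. Under suitable congruences on `(u, v)`, evaluating a fifth power
residue character at a prime above `31` shows `5 ∣ j`, and one above `11` then shows `5 ∣ i`.

The radicand is `D = -S * W` with `S = u² + v²` and `W` coprime to `S`, so a squarefree `S` divides
the squarefree part `d` of `D`. To count fields, let `u` and `v` have sizes `m ^ 10` and `m ^ 6`: a
sieve gives `≫ m ^ 16` distinct squarefree values `S`. In this unbalanced box, few `S` are divisible
by the square of a large prime, and few coincide. As `|d| ≪ m ^ 60`, each `d` has `≪ m` divisors and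
therefore arises from `≪ m` values of `S`, which leaves `≫ m ^ 15` fields, the fourth root of the
range of `d`.
-/

theorem exists_discr_eq_sq_mul_discr {K ι : Type*} [Field K] [NumberField K] [Fintype ι]
    [DecidableEq ι] (v : ι → 𝓞 K) (h : Fintype.card ι = Module.finrank ℚ K) :
    ∃ N : ℤ, Algebra.discr ℤ v = N ^ 2 * discr K := by
  have hcard : Fintype.card (Module.Free.ChooseBasisIndex ℤ (𝓞 K)) = Fintype.card ι := by
    rw [h, ← RingOfIntegers.rank, Module.finrank_eq_card_chooseBasisIndex]
  let b := (RingOfIntegers.basis K).reindex (Fintype.equivOfCardEq hcard)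
  refine ⟨(b.toMatrix v).det, ?_⟩
  rw [← discr_eq_discr K b, ← Algebra.discr_of_matrix_vecMul, b.toMatrix_map_vecMul]

theorem trace_eq_zero_of_sq_eq_algebraMap {F K : Type*} [Field F] [Field K] [Algebra F K]
    [FiniteDimensional F K] {a : F} (ha : ∀ b : F, b ^ 2 ≠ a) {x : K}
    (hx : x ^ 2 = algebraMap F K a) : Algebra.trace F K x = 0 := by
  open Polynomial in
  have hmin : minpoly F x = X ^ 2 - C a :=
    (minpoly.eq_of_irreducible_of_monic (X_pow_sub_C_irreducible_of_prime Nat.prime_two ha)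
      (by simp [hx]) (monic_X_pow_sub_C a two_ne_zero)).symm
  have hcoeff : (minpoly F x).nextCoeff = 0 := by
    rw [hmin, nextCoeff, natDegree_X_pow_sub_C, if_neg two_ne_zero]
    simp
  rw [trace_eq_finrank_mul_minpoly_nextCoeff, hcoeff, neg_zero, mul_zero]

section ImaginaryQuadratic

variable {K : Type*} [Field K] [NumberField K] {d : ℤ} {s : 𝓞 K}

theorem trace_eq_zero_of_mul_self_eq_neg (hd : d < 0) (hs : s * s = d) :
    Algebra.trace ℤ (𝓞 K) s = 0 := by
  have hsq (b : ℚ) : b ^ 2 ≠ d := fun h ↦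
    (sq_nonneg b).not_gt (h ▸ Int.cast_lt_zero.mpr hd)
  have hx : (s : K) ^ 2 = algebraMap ℚ K d := by
    rw [map_intCast, sq, ← map_mul, hs, map_intCast]
  exact_mod_cast (Algebra.coe_trace_int s).trans (trace_eq_zero_of_sq_eq_algebraMap hsq hx)

theorem exists_four_mul_eq_sq_mul_discr (hd : d < 0) (hK : Module.finrank ℚ K = 2)
    (hs : s * s = d) : ∃ N : ℤ, 4 * d = N ^ 2 * discr K := by
  obtain ⟨N, hN⟩ := exists_discr_eq_sq_mul_discr ![1, s] (by simp [hK])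
  have htr_int (n : ℤ) : Algebra.trace ℤ (𝓞 K) n = 2 * n := by
    simpa [RingOfIntegers.rank, hK] using Algebra.trace_algebraMap (S := 𝓞 K) n
  refine ⟨N, hN ▸ ?_⟩
  have htr_one : Algebra.trace ℤ (𝓞 K) 1 = 2 := by simpa using htr_int 1
  simp only [Algebra.discr_def, Matrix.det_fin_two, Algebra.traceMatrix_apply,
    Algebra.traceForm_apply, Matrix.cons_val_zero, Matrix.cons_val_one, mul_one, one_mul, htr_one,
    htr_int, hs, trace_eq_zero_of_mul_self_eq_neg hd hs]
  ring

theorem abs_discr_le_four_mul_abs (hd : d < 0) (hK : Module.finrank ℚ K = 2) (hs : s * s = d) :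
    |discr K| ≤ 4 * |d| := by
  obtain ⟨N, hN⟩ := exists_four_mul_eq_sq_mul_discr hd hK hs
  have hd0 : 4 * d ≠ 0 := by lia
  simpa [abs_mul] using Int.le_of_dvd (abs_pos.mpr hd0) (by
    rw [abs_dvd_abs, hN]; exact dvd_mul_left _ _)

theorem abs_le_four_mul_abs_discr (hd : d < 0) (hsq : Squarefree d) (hK : Module.finrank ℚ K = 2)
    (hs : s * s = d) : |d| ≤ 4 * |discr K| := by
  obtain ⟨N, hN⟩ := exists_four_mul_eq_sq_mul_discr hd hK hs
  have hN4 : N ∣ 4 := hsq.dvd_of_squarefree_of_mul_dvd_mul_right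
    ⟨discr K, by rw [mul_comm d, hN, sq]⟩
  have hN16 : N ^ 2 ≤ 16 := by
    simpa using pow_le_pow_left₀ (abs_nonneg N) (Int.le_of_dvd four_pos (by rwa [abs_dvd])) 2
  have habs : 4 * |d| = N ^ 2 * |discr K| := by
    simpa [abs_mul, abs_pow] using congrArg abs hN
  nlinarith [abs_nonneg (discr K)]

end ImaginaryQuadratic

theorem isTotallyComplex_of_mul_self_eq_neg {K : Type*} [Field K] {d : ℤ} {s : 𝓞 K}
    (hd : d < 0) (hs : s * s = d) : IsTotallyComplex K := by
  refine ⟨fun v ↦ InfinitePlace.not_isReal_iff_isComplex.mp fun hv ↦ ?_⟩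
  let φ := (InfinitePlace.embedding_of_isReal hv).comp (algebraMap (𝓞 K) K)
  have hφ : φ s * φ s = d := by rw [← map_mul, hs, map_intCast]
  exact (mul_self_nonneg (φ s)).not_gt (hφ ▸ Int.cast_lt_zero.mpr hd)

section Units

variable {K : Type*} [Field K] [NumberField K]

theorem rank_eq_zero_of_isTotallyComplex [IsTotallyComplex K] (hK : Module.finrank ℚ K = 2) :
    Units.rank K = 0 := by
  have hfinrank := IsTotallyComplex.finrank K
  rw [Units.rank, InfinitePlace.card_eq_nrRealPlaces_add_nrComplexPlaces,
    IsTotallyComplex.nrRealPlaces_eq_zero]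
  lia

theorem torsion_eq_top_of_rank_eq_zero (h : Units.rank K = 0) : Units.torsion K = ⊤ := by
  have : IsEmpty (Fin (Units.rank K)) := h ▸ Fin.isEmpty
  refine (Subgroup.eq_top_iff' _).mpr fun x ↦ ?_
  obtain ⟨⟨ζ, e⟩, hx, -⟩ := Units.exist_unique_eq_mul_prod K x
  rw [hx, Fintype.prod_empty, mul_one]
  exact ζ.2

theorem coprime_torsionOrder_of_finrank_lt {p : ℕ} (hp : p.Prime)
    (hK : Module.finrank ℚ K < p - 1) : (Units.torsionOrder K).Coprime p := by
  refine ((hp.coprime_iff_not_dvd).mpr fun hdvd ↦ hK.not_ge ?_).symm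
  have : Fact p.Prime := ⟨hp⟩
  obtain ⟨ζ, hζ⟩ := exists_prime_orderOf_dvd_card' (G := Units.torsion K) p hdvd
  have hprim : IsPrimitiveRoot ((ζ : (𝓞 K)ˣ) : K) p := by
    have h := IsPrimitiveRoot.orderOf ζ
    rw [hζ] at h
    exact (((h.map_of_injective (f := (Units.torsion K).subtype)
      Subtype.val_injective).map_of_injective (f := Units.coeHom (𝓞 K))
        Units.val_injective)).map_of_injective (f := algebraMap (𝓞 K) K)
          RingOfIntegers.coe_injective
  calc p - 1 = (minpoly ℚ ((ζ : (𝓞 K)ˣ) : K)).natDegree := by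
        rw [← Polynomial.cyclotomic_eq_minpoly_rat hprim hp.pos, Polynomial.natDegree_cyclotomic,
          Nat.totient_prime hp]
    _ ≤ Module.finrank ℚ K := minpoly.natDegree_le _

theorem exists_unit_pow_eq_of_isTotallyComplex [IsTotallyComplex K]
    (hK : Module.finrank ℚ K = 2) {p : ℕ} (hp : p.Prime) (hp3 : 3 < p) (u : (𝓞 K)ˣ) :
    ∃ w : (𝓞 K)ˣ, w ^ p = u := by
  have htop := torsion_eq_top_of_rank_eq_zero (rank_eq_zero_of_isTotallyComplex hK)
  have hcop := coprime_torsionOrder_of_finrank_lt (K := K) hp (by lia)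
  rw [Units.torsionOrder, htop, Subgroup.card_top] at hcop
  exact hcop.pow_left_bijective.surjective u

end Units

theorem exists_integer_mul_self_eq {K : Type*} [Field K] {d : ℤ} {x : K} (hx : x * x = d) :
    ∃ s : 𝓞 K, s * s = d := by
  have hint : IsIntegral ℤ (x ^ 2) := by rw [sq, hx]; exact isIntegral_algebraMap (x := d)
  obtain ⟨s, rfl⟩ := (IsIntegralClosure.isIntegral_iff (A := 𝓞 K)).mp (hint.of_pow two_pos)
  exact ⟨s, RingOfIntegers.coe_injective (by rw [map_mul, hx, map_intCast])⟩

theorem exists_numberField_mul_self_eq {d : ℤ} (hd : d < 0) :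
    ∃ (K : Type) (_ : Field K) (_ : NumberField K), (∃ x : K, x * x = d) ∧
      Module.finrank ℚ K = 2 := by
  have : Fact (∀ r : ℚ, r ^ 2 ≠ d + 0 * r) := ⟨fun r h ↦
    (sq_nonneg r).not_gt (by rw [h, zero_mul, add_zero]; exact Int.cast_lt_zero.mpr hd)⟩
  have hfinrank : Module.finrank ℚ (QuadraticAlgebra ℚ (d : ℚ) 0) = 2 :=
    QuadraticAlgebra.finrank_eq_two _ _
  have hfinite : FiniteDimensional ℚ (QuadraticAlgebra ℚ (d : ℚ) 0) := inferInstance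
  have hchar : CharZero (QuadraticAlgebra ℚ (d : ℚ) 0) := algebraRat.charZero _
  refine ⟨QuadraticAlgebra ℚ (d : ℚ) 0, inferInstance, @NumberField.mk _ _ hchar ?_,
    ⟨⟨0, 1⟩, by ext <;> simp⟩, ?_⟩
  -- `convert` bridges two provably equal `ℚ`-algebra structures on the quadratic algebra.
  · convert hfinite
  · convert hfinrank

theorem GoodRank5sq.mono {X Y : ℝ} (h : X ≤ Y) {d : ℤ} (hd : GoodRank5sq X d) : GoodRank5sq Y d :=
  ⟨hd.1, hd.2.1, fun K _ _ hx hK ↦ (hd.2.2 K hx hK).imp_left h.trans'⟩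

theorem finite_setOf_goodRank5sq (X : ℝ) : {d : ℤ | GoodRank5sq X d}.Finite := by
  refine (Set.finite_Icc (-⌊4 * X⌋) ⌊4 * X⌋).subset fun d ⟨hd, hsq, hfields⟩ ↦ ?_
  obtain ⟨K, _, _, ⟨x, hx⟩, hK⟩ := exists_numberField_mul_self_eq hd
  obtain ⟨s, hs⟩ := exists_integer_mul_self_eq hx
  have hdiscr : (|d| : ℝ) ≤ 4 * |(discr K : ℝ)| :=
    mod_cast abs_le_four_mul_abs_discr hd hsq hK hs
  refine abs_le.mp (Int.le_floor.mpr ?_)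
  push_cast
  linarith [(hfields K ⟨x, hx⟩ hK).1]

theorem exists_injective_of_pow_mul_pow_eq_one {G : Type*} [CommGroup G] {n : ℕ} [NeZero n]
    {a b : G} (ha : a ^ n = 1) (hb : b ^ n = 1)
    (h : ∀ i j : ℕ, a ^ i * b ^ j = 1 → n ∣ i ∧ n ∣ j) :
    ∃ f : Multiplicative (ZMod n × ZMod n) →* G, Function.Injective f := by
  let f : Multiplicative (ZMod n × ZMod n) →* G :=
    { toFun := fun m ↦ a ^ m.toAdd.1.val * b ^ m.toAdd.2.val
      map_one' := by simp
      map_mul' := fun m k ↦ by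
        simp only [toAdd_mul, Prod.fst_add, Prod.snd_add, ZMod.val_add, ← pow_eq_pow_mod _ ha,
          ← pow_eq_pow_mod _ hb, pow_add]
        exact mul_mul_mul_comm _ _ _ _ }
  refine ⟨f, (injective_iff_map_eq_one f).mpr fun m hm ↦ Multiplicative.toAdd.injective ?_⟩
  obtain ⟨h₁, h₂⟩ := h _ _ hm
  exact Prod.ext
    ((ZMod.val_eq_zero _).mp (Nat.eq_zero_of_dvd_of_lt h₁ (ZMod.val_lt _)))
    ((ZMod.val_eq_zero _).mp (Nat.eq_zero_of_dvd_of_lt h₂ (ZMod.val_lt _)))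

section DedekindDomain

open nonZeroDivisors

variable {R : Type*} [CommRing R] [IsDedekindDomain R] {n : ℕ}

theorem exists_span_singleton_eq_pow {α α' z : R} (h : α * α' = z ^ n) (hα : IsCoprime α α') :
    ∃ I : Ideal R, Ideal.span {α} = I ^ n :=
  exists_eq_pow_of_mul_eq_pow_of_coprime (b := Ideal.span {α'}) (c := Ideal.span {z})
    ((Ideal.isCoprime_span_singleton_iff _ _).mpr hα)
    (by rw [Ideal.span_singleton_mul_span_singleton, h, Ideal.span_singleton_pow])

theorem exists_eq_pow_of_mk0_eq_one (hunits : ∀ u : Rˣ, ∃ w : Rˣ, w ^ n = u) {α : R}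
    {I : (Ideal R)⁰} (hα : Ideal.span {α} = (I : Ideal R) ^ n) (hI : ClassGroup.mk0 I = 1) :
    ∃ γ : R, α = γ ^ n := by
  obtain ⟨γ, hγ : (I : Ideal R) = Ideal.span {γ}⟩ := (ClassGroup.mk0_eq_one_iff I.2).mp hI
  rw [hγ, Ideal.span_singleton_pow, Ideal.span_singleton_eq_span_singleton] at hα
  obtain ⟨u, hu⟩ := hα.symm
  obtain ⟨w, rfl⟩ := hunits u
  exact ⟨γ * w, by rw [mul_pow, ← hu, Units.val_pow_eq_pow_val]⟩

theorem mk0_pow_eq_one {α : R} {I : (Ideal R)⁰} (hα : Ideal.span {α} = (I : Ideal R) ^ n) :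
    ClassGroup.mk0 I ^ n = 1 := by
  rw [← map_pow]
  exact (ClassGroup.mk0_eq_one_iff (I ^ n).2).mpr ⟨α, hα.symm⟩

theorem exists_injective_classGroup [NeZero n] (hunits : ∀ u : Rˣ, ∃ w : Rˣ, w ^ n = u)
    {α α' β β' z w : R} (hα : α * α' = z ^ n) (hα' : IsCoprime α α') (hz : z ≠ 0)
    (hβ : β * β' = w ^ n) (hβ' : IsCoprime β β') (hw : w ≠ 0)
    (h : ∀ (i j : ℕ) (γ : R), α ^ i * β ^ j = γ ^ n → n ∣ i ∧ n ∣ j) :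
    ∃ f : Multiplicative (ZMod n × ZMod n) →* ClassGroup R, Function.Injective f := by
  have exists_root {x x' y : R} (hx : x * x' = y ^ n) (hx' : IsCoprime x x') (hy : y ≠ 0) :
      ∃ I : (Ideal R)⁰, Ideal.span {x} = (I : Ideal R) ^ n := by
    obtain ⟨I, hI⟩ := exists_span_singleton_eq_pow hx hx'
    refine ⟨⟨I, mem_nonZeroDivisors_of_ne_zero ?_⟩, hI⟩
    rintro rfl
    rw [zero_pow (NeZero.ne n), Ideal.zero_eq_bot, Ideal.span_singleton_eq_bot] at hI
    exact pow_ne_zero n hy (by rw [← hx, hI, zero_mul])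
  obtain ⟨I, hI⟩ := exists_root hα hα' hz
  obtain ⟨J, hJ⟩ := exists_root hβ hβ' hw
  refine exists_injective_of_pow_mul_pow_eq_one (mk0_pow_eq_one hI) (mk0_pow_eq_one hJ)
    fun i j hij ↦ ?_
  have hspan : Ideal.span {α ^ i * β ^ j} = ((I ^ i * J ^ j : (Ideal R)⁰) : Ideal R) ^ n := by
    rw [← Ideal.span_singleton_mul_span_singleton, ← Ideal.span_singleton_pow,
      ← Ideal.span_singleton_pow, hI, hJ]
    push_cast
    ring
  obtain ⟨γ, hγ⟩ := exists_eq_pow_of_mk0_eq_one hunits hspan (by simpa using hij)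
  exact h i j γ hγ

end DedekindDomain

theorem prime_dvd_of_mul_pow_eq_pow {M N : Type*} [CommMonoid M] [MonoidWithZero N]
    [NoZeroDivisors N] [Nontrivial N] {ℓ : ℕ} (hℓ : ℓ.Prime) {χ : M →* N}
    (hχ : ∀ x, χ x ≠ 0 → χ x ^ ℓ = 1) {α β γ : M} {j : ℕ} (h : α * β ^ j = γ ^ ℓ)
    (hα : χ α = 1) (hβ₀ : χ β ≠ 0) (hβ₁ : χ β ≠ 1) : ℓ ∣ j := by
  have : Fact ℓ.Prime := ⟨hℓ⟩
  have hpow : χ β ^ j = χ γ ^ ℓ := by rw [← map_pow, ← map_pow, ← h, map_mul, hα, one_mul]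
  have hγ : χ γ ≠ 0 := by
    intro h0
    rw [h0, zero_pow hℓ.ne_zero] at hpow
    exact pow_ne_zero j hβ₀ hpow
  rw [← orderOf_eq_prime (hχ β hβ₀) hβ₁]
  exact orderOf_dvd_of_pow_eq_one (hpow.trans (hχ γ hγ))

theorem pow_prime_pow_sub_one_eq_one {F : Type*} [Field F] [Finite F] {p k m : ℕ}
    (hF : Nat.card F = p ^ k) (hk : k ∣ m) {g : F} (hg : g ≠ 0) : g ^ (p ^ m - 1) = 1 := by
  have := Fintype.ofFinite F
  obtain ⟨c, hc⟩ := Nat.pow_sub_one_dvd_pow_sub_one (x := p) hk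
  rw [hc, ← hF, Nat.card_eq_fintype_card, pow_mul, FiniteField.pow_card_sub_one_eq_one g hg,
    one_pow]

section ResidueField

universe u

variable {K : Type u} [Field K] [NumberField K]

theorem exists_maximal_card_quotient_eq_prime_pow {p : ℕ} (hp : p.Prime) :
    ∃ P : Ideal (𝓞 K), P.IsMaximal ∧ (p : 𝓞 K) ∈ P ∧
      ∃ k ≤ Module.finrank ℚ K, k ≠ 0 ∧ Nat.card (𝓞 K ⧸ P) = p ^ k := by
  have hnorm : (Ideal.span {(p : 𝓞 K)}).absNorm = p ^ Module.finrank ℚ K := by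
    rw [Ideal.absNorm_span_natCast, RingOfIntegers.rank]
  have hne : Ideal.span {(p : 𝓞 K)} ≠ ⊤ := fun h ↦ by
    rw [h, Ideal.absNorm_top, eq_comm, Nat.pow_eq_one] at hnorm
    exact hnorm.elim hp.ne_one Module.finrank_pos.ne'
  obtain ⟨P, hP, hle⟩ := Ideal.exists_le_maximal _ hne
  obtain ⟨k, hk, hcard⟩ := (Nat.dvd_prime_pow hp).mp (hnorm ▸ Ideal.absNorm_dvd_absNorm_of_le hle)
  refine ⟨P, hP, hle (Ideal.mem_span_singleton_self _), k, hk, ?_, hcard⟩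
  rintro rfl
  exact hP.ne_top (Ideal.absNorm_eq_one_iff.mp hcard)

theorem exists_residue_character (hK : Module.finrank ℚ K = 2) {p : ℕ} (hp : p.Prime)
    {ℓ n : ℕ} (hn : ℓ * n = p ^ 2 - 1) {D : ℤ} {s : 𝓞 K} (hs : s * s = D)
    {e : ZMod p} (he : e * e = D) :
    ∃ (F : Type u) (_ : Field F) (ι : ZMod p →+* F) (χ : 𝓞 K →* F),
      Function.Injective ι ∧ (∀ γ, χ γ ≠ 0 → χ γ ^ ℓ = 1) ∧
      ∃ σ : ZMod p, (σ = e ∨ σ = -e) ∧ ∀ x y : ℤ, χ (x + y * s) = ι ((x + y * σ) ^ n) := by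
  have : Fact p.Prime := ⟨hp⟩
  obtain ⟨P, hP, hpP, k, hk, hk0, hcard⟩ := exists_maximal_card_quotient_eq_prime_pow (K := K) hp
  let : Field (𝓞 K ⧸ P) := Ideal.Quotient.field P
  let φ : 𝓞 K →+* 𝓞 K ⧸ P := Ideal.Quotient.mk P
  have : Finite (𝓞 K ⧸ P) := Nat.finite_of_card_ne_zero (hcard ▸ (pow_pos hp.pos _).ne')
  have : CharP (𝓞 K ⧸ P) p := (CharP.charP_iff_prime_eq_zero hp).mpr
    ((map_natCast φ p).symm.trans (Ideal.Quotient.eq_zero_iff_mem.mpr hpP))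
  let ι : ZMod p →+* 𝓞 K ⧸ P := ZMod.castHom dvd_rfl _
  have hroot : φ s = ι e ∨ φ s = ι (-e) := by
    rw [map_neg, ← mul_self_eq_mul_self_iff, ← map_mul, ← map_mul, hs, he, map_intCast, map_intCast]
  have hk2 : k ∣ 2 := by
    rw [hK] at hk
    interval_cases k <;> simp_all
  have hn0 : n ≠ 0 := by
    rintro rfl
    have := Nat.pow_le_pow_left hp.two_le 2
    lia
  refine ⟨𝓞 K ⧸ P, inferInstance, ι, (powMonoidHom n).comp φ, ι.injective, fun γ hγ ↦ ?_, ?_⟩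
  · rw [MonoidHom.comp_apply, powMonoidHom_apply, ← pow_mul, mul_comm, hn]
    exact pow_prime_pow_sub_one_eq_one hcard hk2 (ne_zero_pow hn0 hγ)
  · have hχ {σ : ZMod p} (hσ : φ s = ι σ) (x y : ℤ) :
        φ (x + y * s) ^ n = ι ((x + y * σ) ^ n) := by
      simp [hσ]
    exact hroot.elim (fun h ↦ ⟨e, .inl rfl, hχ h⟩) (fun h ↦ ⟨-e, .inr rfl, hχ h⟩)

end ResidueField

section Coprimality

theorem isCoprime_of_mul_eq_pow_of_isCoprime_add {R : Type*} [CommRing R] {a b z : R} {n : ℕ}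
    (h : a * b = z ^ n) (hz : IsCoprime (a + b) z) : IsCoprime a b := by
  have hab : IsCoprime (a + b) (a * b) := h ▸ hz.pow_right
  exact (IsCoprime.add_mul_left_right_iff (z := 1)).mp <|
    by simpa [add_comm] using hab.of_mul_right_left.symm

theorem isCoprime_of_modEq {a b n : ℤ} (h : a ≡ b [ZMOD n]) (hb : IsCoprime b n) :
    IsCoprime a n := by
  obtain ⟨k, hk⟩ := h.symm.dvd
  rw [eq_add_of_sub_eq' hk]
  exact hb.add_mul_left_left k

theorem isCoprime_iff_forall_zmod {a b : ℤ} :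
    IsCoprime a b ↔ ∀ p : ℕ, [Fact p.Prime] → (a : ZMod p) = 0 → (b : ZMod p) ≠ 0 := by
  simp only [Int.isCoprime_iff_gcd_eq_one, Nat.eq_one_iff_not_exists_prime_dvd, Ne,
    ZMod.intCast_zmod_eq_zero_iff_dvd, fact_iff]
  simp only [← Int.natCast_dvd_natCast, Int.dvd_coe_gcd_iff, not_and]

theorem isCoprime_of_squarefree_sq_add_sq {u v : ℤ} (h : Squarefree (u ^ 2 + v ^ 2)) :
    IsCoprime u v :=
  isCoprime_of_prime_dvd (by rintro ⟨rfl, rfl⟩; simp at h) fun p hp hu hv ↦ hp.not_isUnit <|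
    h p <| by simpa only [sq] using dvd_add (mul_dvd_mul hu hu) (mul_dvd_mul hv hv)

theorem dvd_of_squarefree_of_mul_eq_sq_mul {S W a b : ℤ} (hS : Squarefree S) (hW : IsCoprime S W)
    (h : S * W = b ^ 2 * a) : S ∣ a := by
  have hbW : b ∣ W := hS.dvd_of_squarefree_of_mul_dvd_mul_right ⟨a, by rw [h, sq]⟩
  exact (hW.of_isCoprime_of_dvd_right hbW).pow_right.dvd_of_dvd_mul_left (Dvd.intro W h)

end Coprimality

section Family

variable {R : Type*} [CommRing R]

/-- The quadratic form `Z(u, v)` for which `Z ^ 10` is represented by the norm form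
`X ^ 2 - D * Y ^ 2` of the family. -/
def baseForm (u v : R) : R := 304 * u ^ 2 + 1001 * v ^ 2

/-- With `c = 342 * (u ^ 2 + v ^ 2)`, the form `A = Z ^ 2 - 8 * c * Z + 10 * c ^ 2`, chosen so that
`697 * v ^ 2 * A ^ 2 - Z ^ 5` has the square factor `(Z - c) ^ 2`. Note that
`697 * v ^ 2 = Z - 8 * c / 9`. -/
def auxForm (u v : R) : R :=
  baseForm u v ^ 2 - 8 * (342 * (u ^ 2 + v ^ 2)) * baseForm u v + 10 * (342 * (u ^ 2 + v ^ 2)) ^ 2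

/-- The coordinate `X` in `X ^ 2 - D * Y ^ 2 = Z ^ 10`. -/
def ratPart (u v : R) : R := 2 * (697 * v ^ 2) * auxForm u v ^ 2 - baseForm u v ^ 5

/-- The coordinate `Y` in `X ^ 2 - D * Y ^ 2 = Z ^ 10`. -/
def irratPart (u v : R) : R :=
  152 * v * auxForm u v * (baseForm u v - 342 * (u ^ 2 + v ^ 2))

/-- The quartic factor of the radicand `D`; here `485809 = 697 ^ 2`. -/
def quarticForm (u v : R) : R := 311296 * (u ^ 2 + v ^ 2) ^ 2 - 485809 * (u ^ 2 * v ^ 2)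

/-- The radicand `D` in `X ^ 2 - D * Y ^ 2 = Z ^ 10`. It is symmetric in `u` and `v`, so that
exchanging `u` and `v` yields a second solution for the same `D`. -/
def radicand (u v : R) : R := -((u ^ 2 + v ^ 2) * (697 * quarticForm u v))

theorem radicand_comm (u v : R) : radicand u v = radicand v u := by
  simp only [radicand, quarticForm]
  ring

theorem ratPart_sq_sub_radicand_mul_irratPart_sq (u v : R) :
    ratPart u v ^ 2 - radicand u v * irratPart u v ^ 2 = baseForm u v ^ 10 := by
  simp only [ratPart, radicand, quarticForm, irratPart, auxForm, baseForm]
  ring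

theorem cast_ratPart (u v : ℤ) : ((ratPart u v : ℤ) : R) = ratPart (u : R) (v : R) := by
  simp [ratPart, auxForm, baseForm]

theorem cast_irratPart (u v : ℤ) : ((irratPart u v : ℤ) : R) = irratPart (u : R) (v : R) := by
  simp [irratPart, auxForm, baseForm]

theorem cast_radicand (u v : ℤ) : ((radicand u v : ℤ) : R) = radicand (u : R) (v : R) := by
  simp [radicand, quarticForm]

section Domain

variable [IsDomain R] {u v : R}

theorem two_mul_ratPart_ne_zero (h : (397290 : R) ≠ 0) (huv : u = 0 → v ≠ 0)
    (hz : baseForm u v = 0) : 2 * ratPart u v ≠ 0 := by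
  rw [show (397290 : R) = 2 * 3 * 5 * 17 * 19 * 41 by norm_num] at h
  simp only [mul_ne_zero_iff] at h
  obtain ⟨⟨⟨⟨⟨h2, h3⟩, h5⟩, h17⟩, h19⟩, h41⟩ := h
  have hv : v ≠ 0 := by
    rintro rfl
    have : 2 ^ 4 * 19 * u ^ 2 = 0 := by
      simp only [baseForm] at hz
      linear_combination hz
    simp_all
  have hS : u ^ 2 + v ^ 2 ≠ 0 := fun hS ↦ by
    have : 17 * 41 * v ^ 2 = 0 := by
      simp only [baseForm] at hz
      linear_combination hz - 304 * hS
    simp_all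
  have hX : 2 * ratPart u v =
      2 ^ 2 * (17 * 41 * v ^ 2) * (2 * 5 * (2 * 3 ^ 2 * 19 * (u ^ 2 + v ^ 2)) ^ 2) ^ 2 := by
    simp only [ratPart, auxForm, hz]
    ring
  simp [hX, h2, h3, h5, h17, h19, h41, hv, hS]

theorem mul_quarticForm_ne_zero (h : (697 : R) ≠ 0) (huv : u = 0 → v ≠ 0)
    (hS : u ^ 2 + v ^ 2 = 0) : 697 * quarticForm u v ≠ 0 := by
  have hu : u ≠ 0 := by
    rintro rfl
    simp_all
  have hv : v ≠ 0 := by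
    rintro rfl
    simp_all
  rw [quarticForm, hS, show (485809 : R) = 697 ^ 2 by norm_num]
  simp [h, hu, hv]

end Domain

theorem isCoprime_two_mul_ratPart {u v : ℤ} (huv : IsCoprime u v)
    (hz : IsCoprime (baseForm u v) 397290) : IsCoprime (2 * ratPart u v) (baseForm u v) := by
  rw [isCoprime_comm]
  simp only [isCoprime_iff_forall_zmod] at huv hz ⊢
  intro p _ h
  have := two_mul_ratPart_ne_zero (u := (u : ZMod p)) (v := v) (by simpa using hz p h) (huv p)
    (by simpa [baseForm] using h)
  simpa [cast_ratPart] using this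

theorem isCoprime_mul_quarticForm {u v : ℤ} (huv : IsCoprime u v)
    (hS : IsCoprime (u ^ 2 + v ^ 2) 697) :
    IsCoprime (u ^ 2 + v ^ 2) (697 * quarticForm u v) := by
  simp only [isCoprime_iff_forall_zmod] at huv hS ⊢
  intro p _ h
  have := mul_quarticForm_ne_zero (u := (u : ZMod p)) (v := v) (by simpa using hS p h) (huv p)
    (by simpa using h)
  simpa [quarticForm] using this

/-- The element `X + Y * √D` of the family, where `s` stands for `√D`; its conjugate is
`familyElement (-s) u v`. -/
def familyElement (s u v : R) : R := ratPart u v + irratPart u v * s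

theorem familyElement_mul_familyElement_neg {s u v : R} (hs : s * s = radicand u v) :
    familyElement s u v * familyElement (-s) u v = (baseForm u v ^ 2) ^ 5 := by
  simp only [familyElement]
  linear_combination
    ratPart_sq_sub_radicand_mul_irratPart_sq u v - irratPart u v ^ 2 * hs

theorem isCoprime_familyElement {s : R} {u v : ℤ} (hs : s * s = radicand (u : R) v)
    (huv : IsCoprime u v) (hz : IsCoprime (baseForm u v) 397290) :
    IsCoprime (familyElement s (u : R) v) (familyElement (-s) (u : R) v) := by
  refine isCoprime_of_mul_eq_pow_of_isCoprime_add (familyElement_mul_familyElement_neg hs) ?_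
  have h := ((isCoprime_two_mul_ratPart huv hz).pow_right (n := 2)).intCast (R := R)
  convert h using 1
  · simp only [familyElement, Int.cast_mul, cast_ratPart]
    push_cast
    ring
  · simp [baseForm]

end Family

section Congruences

/-- The modulus `2 * 3 * 5 * 7 * 11 * 13 * 17 * 19 * 31 * 41` of the congruences imposed on the
parameters of the family. It contains the prime factors of `2 * 697` and of the coefficients of the
forms above, the primes `11` and `31` at which classes are separated, and all primes below `20`. -/
def familyModulus : ℕ := 12328305990

/-- The residue `v₀` modulo `familyModulus` such that for `u ≡ 1` and `v ≡ v₀` the forms `Z(u, v)`,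
`Z(v, u)` and `u ^ 2 + v ^ 2` satisfy the required coprimality conditions, while `v ≡ 1` modulo `11`
and `v ≡ 0` modulo `31`. -/
def familyResidue : ℕ := 3686694375

variable {u v : ℤ}

theorem intCast_zmod_eq_of_modEq {a b : ℤ} {p : ℕ} (hp : p ∣ familyModulus)
    (h : a ≡ b [ZMOD familyModulus]) : (a : ZMod p) = b :=
  (ZMod.intCast_eq_intCast_iff _ _ p).mpr (h.of_dvd (Int.natCast_dvd_natCast.mpr hp))

theorem isCoprime_baseForm (hu : u ≡ 1 [ZMOD familyModulus])
    (hv : v ≡ familyResidue [ZMOD familyModulus]) : IsCoprime (baseForm u v) 397290 := by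
  have h : baseForm u v ≡ baseForm 1 (familyResidue : ℤ) [ZMOD familyModulus] := by
    simp only [baseForm]
    gcongr
  exact isCoprime_of_modEq (h.of_dvd (by norm_num [familyModulus]))
    (by norm_num [baseForm, familyResidue])

theorem isCoprime_baseForm_swap (hu : u ≡ 1 [ZMOD familyModulus])
    (hv : v ≡ familyResidue [ZMOD familyModulus]) : IsCoprime (baseForm v u) 397290 := by
  have h : baseForm v u ≡ baseForm (familyResidue : ℤ) 1 [ZMOD familyModulus] := by
    simp only [baseForm]
    gcongr
  exact isCoprime_of_modEq (h.of_dvd (by norm_num [familyModulus]))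
    (by norm_num [baseForm, familyResidue])

theorem isCoprime_sq_add_sq (hu : u ≡ 1 [ZMOD familyModulus])
    (hv : v ≡ familyResidue [ZMOD familyModulus]) : IsCoprime (u ^ 2 + v ^ 2) 697 := by
  have h : u ^ 2 + v ^ 2 ≡ 1 ^ 2 + (familyResidue : ℤ) ^ 2 [ZMOD familyModulus] := by
    gcongr
  exact isCoprime_of_modEq (h.of_dvd (by norm_num [familyModulus])) (by norm_num [familyResidue])

end Congruences

section ClassGroup

universe w

variable {K : Type w} [Field K] [NumberField K] {s : 𝓞 K} {u v : ℤ} {i j : ℕ} {γ : 𝓞 K}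

theorem exists_familyElement_character (hK : Module.finrank ℚ K = 2) {p : ℕ} (hp : p.Prime)
    {ℓ n : ℕ} (hn : ℓ * n = p ^ 2 - 1) (hs : s * s = radicand (u : 𝓞 K) v) {a b e : ZMod p}
    (hu : (u : ZMod p) = a) (hv : (v : ZMod p) = b) (he : e * e = radicand a b) :
    ∃ (F : Type w) (_ : Field F) (ι : ZMod p →+* F) (χ : 𝓞 K →* F),
      Function.Injective ι ∧ (∀ γ, χ γ ≠ 0 → χ γ ^ ℓ = 1) ∧ ∃ σ : ZMod p, (σ = e ∨ σ = -e) ∧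
        χ (familyElement s u v) = ι (familyElement σ a b ^ n) ∧
        χ (familyElement s v u) = ι (familyElement σ b a ^ n) := by
  subst hu hv
  obtain ⟨F, _, ι, χ, hι, hχ, σ, hσ, h⟩ := exists_residue_character hK hp hn (D := radicand u v)
    (by rw [hs, cast_radicand]) (by rw [he, cast_radicand])
  refine ⟨F, _, ι, χ, hι, hχ, σ, hσ, ?_, ?_⟩ <;>
  simp only [familyElement, ← cast_ratPart, ← cast_irratPart, h]

theorem five_dvd_right (hK : Module.finrank ℚ K = 2) (hs : s * s = radicand (u : 𝓞 K) v)
    (hu : (u : ZMod 31) = 1) (hv : (v : ZMod 31) = 0)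
    (h : familyElement s (u : 𝓞 K) v ^ i * familyElement s (v : 𝓞 K) u ^ j = γ ^ 5) : 5 ∣ j := by
  obtain ⟨F, _, ι, χ, hι, hχ, σ, hσ, hα, hβ⟩ := exists_familyElement_character hK (p := 31)
    (by norm_num) (ℓ := 5) (n := 192) (by norm_num) hs hu hv (e := 11) (by decide)
  have hresidue : familyElement σ 1 0 ^ 192 = 1 ∧ familyElement σ 0 1 ^ 192 ≠ 0 ∧
      familyElement σ 0 1 ^ 192 ≠ 1 := by
    rcases hσ with rfl | rfl <;> decide +kernel
  obtain ⟨h₁, h₂, h₃⟩ := hresidue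
  exact prime_dvd_of_mul_pow_eq_pow Nat.prime_five hχ h (by simp [hα, h₁])
    (hβ ▸ (map_ne_zero_iff ι hι).mpr h₂) (hβ ▸ (map_ne_one_iff ι hι).mpr h₃)

theorem five_dvd_left (hK : Module.finrank ℚ K = 2) (hs : s * s = radicand (u : 𝓞 K) v)
    (hu : (u : ZMod 11) = 1) (hv : (v : ZMod 11) = 1)
    (h : familyElement s (u : 𝓞 K) v ^ i * familyElement s (v : 𝓞 K) u ^ j = γ ^ 5)
    (hj : 5 ∣ j) : 5 ∣ i := by
  obtain ⟨F, _, ι, χ, hι, hχ, σ, hσ, hα, hβ⟩ := exists_familyElement_character hK (p := 11)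
    (by norm_num) (ℓ := 5) (n := 24) (by norm_num) hs hu hv (e := 5) (by decide)
  have hresidue : familyElement σ 1 1 ^ 24 ≠ 0 ∧ familyElement σ 1 1 ^ 24 ≠ 1 := by
    rcases hσ with rfl | rfl <;> decide +kernel
  obtain ⟨h₁, h₂⟩ := hresidue
  obtain ⟨t, rfl⟩ := hj
  have hβ₅ : χ (familyElement s (v : 𝓞 K) u ^ (5 * t)) = 1 := by
    rw [map_pow, pow_mul, hχ _ (hβ ▸ (map_ne_zero_iff ι hι).mpr h₁), one_pow]
  exact prime_dvd_of_mul_pow_eq_pow Nat.prime_five hχ ((mul_comm _ _).trans h) hβ₅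
    (hα ▸ (map_ne_zero_iff ι hι).mpr h₁) (hα ▸ (map_ne_one_iff ι hι).mpr h₂)

theorem exists_injective_classGroup_of_modEq [NumberField.IsTotallyComplex K]
    (hK : Module.finrank ℚ K = 2) (hu : u ≡ 1 [ZMOD familyModulus])
    (hv : v ≡ familyResidue [ZMOD familyModulus]) (huv : IsCoprime u v)
    (hs : s * s = radicand (u : 𝓞 K) v) :
    ∃ f : Multiplicative (ZMod 5 × ZMod 5) →* ClassGroup (𝓞 K), Function.Injective f := by
  have ne_zero {z : ℤ} (hz : IsCoprime z 397290) : ((z ^ 2 : ℤ) : 𝓞 K) ≠ 0 := by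
    rintro h
    obtain rfl : z = 0 := by simpa using h
    norm_num at hz
  have hz := isCoprime_baseForm hu hv
  have hw := isCoprime_baseForm_swap hu hv
  have hs' : s * s = radicand (v : 𝓞 K) u := hs.trans (radicand_comm _ _)
  refine exists_injective_classGroup
    (exists_unit_pow_eq_of_isTotallyComplex hK Nat.prime_five (by norm_num))
    (familyElement_mul_familyElement_neg hs) (isCoprime_familyElement hs huv hz)
    (by simpa [baseForm] using ne_zero hz)
    (familyElement_mul_familyElement_neg hs') (isCoprime_familyElement hs' huv.symm hw)
    (by simpa [baseForm] using ne_zero hw) fun i j γ h ↦ ?_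
  have hj : 5 ∣ j := five_dvd_right hK hs
    (by simpa using intCast_zmod_eq_of_modEq (by norm_num [familyModulus]) hu)
    (by
      rw [intCast_zmod_eq_of_modEq (by norm_num [familyModulus]) hv, familyResidue]
      decide) h
  exact ⟨five_dvd_left hK hs
    (by simpa using intCast_zmod_eq_of_modEq (by norm_num [familyModulus]) hu)
    (by
      rw [intCast_zmod_eq_of_modEq (by norm_num [familyModulus]) hv, familyResidue]
      decide) h hj, hj⟩

end ClassGroup

section Discriminants

variable {u v : ℤ}

theorem quarticForm_pos (h : 0 < u ^ 2 + v ^ 2) : 0 < quarticForm u v := by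
  have hS : 0 < (u ^ 2 + v ^ 2) ^ 2 := pow_pos h 2
  have hamgm : 4 * (u ^ 2 * v ^ 2) ≤ (u ^ 2 + v ^ 2) ^ 2 := by
    linarith [four_mul_le_sq_add (u ^ 2) (v ^ 2)]
  rw [quarticForm]
  linarith

theorem quarticForm_le : quarticForm u v ≤ 311296 * (u ^ 2 + v ^ 2) ^ 2 := by
  have : 0 ≤ u ^ 2 * v ^ 2 := by positivity
  rw [quarticForm]
  linarith

theorem radicand_neg (h : 0 < u ^ 2 + v ^ 2) : radicand u v < 0 :=
  neg_neg_of_pos (mul_pos h (mul_pos (by norm_num) (quarticForm_pos h)))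

theorem abs_radicand_le (h : 0 < u ^ 2 + v ^ 2) :
    |radicand u v| ≤ 216973312 * (u ^ 2 + v ^ 2) ^ 3 := by
  rw [abs_of_neg (radicand_neg h), radicand, neg_neg]
  calc (u ^ 2 + v ^ 2) * (697 * quarticForm u v)
      ≤ (u ^ 2 + v ^ 2) * (697 * (311296 * (u ^ 2 + v ^ 2) ^ 2)) := by
        gcongr
        exact quarticForm_le
    _ = 216973312 * (u ^ 2 + v ^ 2) ^ 3 := by ring

theorem exists_neg_squarefree_mul_sq {D : ℤ} (hD : D < 0) :
    ∃ d f : ℤ, d < 0 ∧ Squarefree d ∧ f ^ 2 * d = D := by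
  obtain ⟨a, b, hab, ha⟩ := Nat.sq_mul_squarefree D.natAbs
  refine ⟨-a, b, ?_, ?_, ?_⟩
  · simpa [Nat.pos_iff_ne_zero] using ha.ne_zero
  · exact Int.squarefree_natAbs.mp (by simpa using ha)
  · have := congrArg (Nat.cast (R := ℤ)) hab
    push_cast at this
    rw [abs_of_neg hD] at this
    linarith

theorem goodRank5sq_of_radicand_eq {d f : ℤ} (hd : d < 0) (hsq : Squarefree d)
    (hu : u ≡ 1 [ZMOD familyModulus]) (hv : v ≡ familyResidue [ZMOD familyModulus])
    (huv : IsCoprime u v) (hD : f ^ 2 * d = radicand u v) : GoodRank5sq (4 * |d|) d := by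
  refine ⟨hd, hsq, fun K _ _ ⟨x, hx⟩ hK ↦ ?_⟩
  obtain ⟨s, hs⟩ := exists_integer_mul_self_eq hx
  have := isTotallyComplex_of_mul_self_eq_neg hd hs
  refine ⟨mod_cast abs_discr_le_four_mul_abs hd hK hs,
    exists_injective_classGroup_of_modEq (s := f * s) hK hu hv huv ?_⟩
  have := congrArg (Int.cast (R := 𝓞 K)) hD
  rw [cast_radicand] at this
  push_cast at this
  linear_combination (f : 𝓞 K) ^ 2 * hs + this

theorem exists_goodRank5sq (hu : u ≡ 1 [ZMOD familyModulus])
    (hv : v ≡ familyResidue [ZMOD familyModulus]) (hsq : Squarefree (u ^ 2 + v ^ 2)) :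
    ∃ d : ℤ, GoodRank5sq (4 * |d|) d ∧ |d| ≤ 216973312 * (u ^ 2 + v ^ 2) ^ 3 ∧
      u ^ 2 + v ^ 2 ∣ d := by
  have hS : 0 < u ^ 2 + v ^ 2 := hsq.ne_zero.symm.lt_of_le (by positivity)
  have huv := isCoprime_of_squarefree_sq_add_sq hsq
  obtain ⟨d, f, hd, hd_sq, hD⟩ := exists_neg_squarefree_mul_sq (radicand_neg hS)
  have hf : f ≠ 0 := by
    rintro rfl
    linarith [radicand_neg hS]
  have hf_sq : 1 ≤ f ^ 2 := Order.one_le_iff_pos.mpr (by positivity)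
  refine ⟨d, goodRank5sq_of_radicand_eq hd hd_sq hu hv huv hD, ?_, ?_⟩
  · calc |d| ≤ f ^ 2 * |d| := le_mul_of_one_le_left (abs_nonneg d) hf_sq
      _ = |radicand u v| := by rw [← hD, abs_mul, abs_sq]
      _ ≤ _ := abs_radicand_le hS
  · exact dvd_of_squarefree_of_mul_eq_sq_mul hsq
      (isCoprime_mul_quarticForm huv (isCoprime_sq_add_sq hu hv)).neg_right
      (by rw [hD, radicand, mul_neg])

end Discriminants

section Sieve

open Finset

/-- The integers congruent to `a` modulo `M` in the interval `[M * n, 2 * M * n)`. -/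
def dyadicResidues (M a n : ℕ) : Finset ℕ := {u ∈ Ico (M * n) (2 * (M * n)) | u ≡ a [MOD M]}

variable {M a b I J p : ℕ}

theorem mem_dyadicResidues {n u : ℕ} :
    u ∈ dyadicResidues M a n ↔ (M * n ≤ u ∧ u < 2 * (M * n)) ∧ u ≡ a [MOD M] := by
  rw [dyadicResidues, mem_filter, mem_Ico]

theorem card_dyadicResidues (hM : 0 < M) (a n : ℕ) : #(dyadicResidues M a n) = n := by
  have h : ((2 * (M * n) : ℕ) - a : ℚ) / M = ((M * n : ℕ) - a : ℚ) / M + n := by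
    push_cast
    field_simp
    ring
  zify
  rw [dyadicResidues, Nat.Ico_filter_modEq_card _ _ hM, h, Int.ceil_add_natCast,
    add_sub_cancel_left]
  simp

theorem card_filter_Ico_modEq_le {r : ℕ} (hr : 0 < r) (x L c : ℕ) :
    (#{u ∈ Ico x (x + L) | u ≡ c [MOD r]} : ℝ) ≤ L / r + 1 := by
  have h : (((x + L : ℕ) : ℚ) - c) / r = (x - c) / r + L / r := by
    push_cast
    ring
  have hceil : (#{u ∈ Ico x (x + L) | u ≡ c [MOD r]} : ℤ) ≤ ⌈(L : ℚ) / r⌉ := by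
    rw [Nat.Ico_filter_modEq_card _ _ hr, h, max_le_iff, sub_le_iff_le_add']
    exact ⟨Int.ceil_add_le _ _, Int.ceil_nonneg (by positivity)⟩
  have hlt := (Int.cast_le (R := ℚ).mpr hceil).trans (Int.ceil_lt_add_one _).le
  simpa using (Rat.cast_le (K := ℝ)).mpr hlt

theorem card_filter_dyadicResidues_zmod_le (hM : 0 < M) {r : ℕ} (hr : M.Coprime r) [NeZero r]
    (c : ZMod r) (a n : ℕ) :
    (#{u ∈ dyadicResidues M a n | ((u : ℕ) : ZMod r) = c} : ℝ) ≤ n / r + 1 := by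
  obtain ⟨x, hxa, hxc⟩ := Nat.chineseRemainder hr a c.val
  have hsub : {u ∈ dyadicResidues M a n | ((u : ℕ) : ZMod r) = c} ⊆
      {u ∈ Ico (M * n) (M * n + M * n) | u ≡ x [MOD M * r]} := fun u hu ↦ by
    rw [mem_filter, dyadicResidues, mem_filter, two_mul] at hu
    obtain ⟨⟨hu, hua⟩, huc⟩ := hu
    refine mem_filter.mpr ⟨hu, (Nat.modEq_and_modEq_iff_modEq_mul hr).mp
      ⟨hua.trans hxa.symm, Nat.ModEq.trans ?_ hxc.symm⟩⟩
    rw [← ZMod.natCast_eq_natCast_iff, huc, ZMod.natCast_zmod_val]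
  calc (#{u ∈ dyadicResidues M a n | ((u : ℕ) : ZMod r) = c} : ℝ)
      ≤ #{u ∈ Ico (M * n) (M * n + M * n) | u ≡ x [MOD M * r]} := mod_cast card_le_card hsub
    _ ≤ (M * n : ℕ) / (M * r : ℕ) + 1 :=
        card_filter_Ico_modEq_le (Nat.mul_pos hM (NeZero.pos r)) _ _ _
    _ = n / r + 1 := by
        have : (M : ℝ) ≠ 0 := mod_cast hM.ne'
        push_cast
        rw [mul_div_mul_left _ _ this]

theorem prime_sq_dvd_sub_or_dvd_add {p x y : ℤ} (hp : Prime p) (hx : ¬ p ∣ 2 * x)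
    (h : p ^ 2 ∣ x ^ 2 - y ^ 2) : p ^ 2 ∣ x - y ∨ p ^ 2 ∣ x + y := by
  rw [sq_sub_sq] at h
  by_cases hsub : p ∣ x - y
  · have hadd : ¬ p ∣ x + y := fun hadd ↦ hx (by simpa [two_mul] using dvd_add hadd hsub)
    exact .inl (hp.pow_dvd_of_dvd_mul_left 2 hadd h)
  · exact .inr (hp.pow_dvd_of_dvd_mul_right 2 hsub h)

theorem zmod_sq_eq_or_eq_neg (hp : p.Prime) (hp2 : p ≠ 2) {v x y : ℕ} (hv : ¬ p ∣ v)
    (hx : p ^ 2 ∣ x ^ 2 + v ^ 2) (hy : p ^ 2 ∣ y ^ 2 + v ^ 2) :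
    (y : ZMod (p ^ 2)) = x ∨ (y : ZMod (p ^ 2)) = -x := by
  have hpx : ¬ p ∣ x := fun h ↦ hv <| hp.dvd_of_dvd_pow (n := 2) <|
    (Nat.dvd_add_right (h.trans (dvd_pow_self x two_ne_zero))).mp
      ((dvd_pow_self p two_ne_zero).trans hx)
  have hp2x : ¬ (p : ℤ) ∣ 2 * x := by
    rw [(Nat.prime_iff_prime_int.mp hp).dvd_mul, not_or]
    exact ⟨mod_cast (Nat.prime_dvd_prime_iff_eq hp Nat.prime_two).not.mpr hp2, mod_cast hpx⟩
  have hsub : (p : ℤ) ^ 2 ∣ (x : ℤ) ^ 2 - (y : ℤ) ^ 2 := by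
    have := dvd_sub (Int.natCast_dvd_natCast.mpr hx) (Int.natCast_dvd_natCast.mpr hy)
    push_cast at this
    rwa [add_sub_add_right_eq_sub] at this
  rcases prime_sq_dvd_sub_or_dvd_add (Nat.prime_iff_prime_int.mp hp) hp2x hsub with h | h
  · left
    rw [← Nat.cast_pow] at h
    have := (ZMod.intCast_zmod_eq_zero_iff_dvd _ _).mpr h
    push_cast at this
    exact (sub_eq_zero.mp this).symm
  · right
    rw [← Nat.cast_pow] at h
    have := (ZMod.intCast_zmod_eq_zero_iff_dvd _ _).mpr h
    push_cast at this
    linear_combination this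

theorem card_filter_sq_dvd_sq_add_sq_le (hM : 0 < M) (hp : p.Prime) (hp2 : p ≠ 2)
    (hpM : ¬ p ∣ M) {v : ℕ} (hv : ¬ p ∣ v) (a n : ℕ) :
    (#{u ∈ dyadicResidues M a n | p ^ 2 ∣ u ^ 2 + v ^ 2} : ℝ) ≤ 2 * (n / p ^ 2 + 1) := by
  have := NeZero.mk hp.ne_zero
  have hcop : M.Coprime (p ^ 2) := ((hp.coprime_iff_not_dvd.mpr hpM).pow_left 2).symm
  rcases {u ∈ dyadicResidues M a n | p ^ 2 ∣ u ^ 2 + v ^ 2}.eq_empty_or_nonempty with h | ⟨x, hx⟩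
  · rw [h, card_empty, Nat.cast_zero]
    positivity
  let residues (c : ZMod (p ^ 2)) : Finset ℕ :=
    {u ∈ dyadicResidues M a n | ((u : ℕ) : ZMod (p ^ 2)) = c}
  have hsub : {u ∈ dyadicResidues M a n | p ^ 2 ∣ u ^ 2 + v ^ 2} ⊆ residues x ∪ residues (-x) := by
    intro u hu
    rw [← filter_or, mem_filter]
    exact ⟨filter_subset _ _ hu,
      zmod_sq_eq_or_eq_neg hp hp2 hv (mem_filter.mp hx).2 (mem_filter.mp hu).2⟩
  have hcard (c : ZMod (p ^ 2)) : (#(residues c) : ℝ) ≤ n / p ^ 2 + 1 :=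
    mod_cast card_filter_dyadicResidues_zmod_le hM hcop c a n
  calc (#{u ∈ dyadicResidues M a n | p ^ 2 ∣ u ^ 2 + v ^ 2} : ℝ)
      ≤ #(residues x) + #(residues (-x)) := mod_cast (card_le_card hsub).trans (card_union_le _ _)
    _ ≤ 2 * (n / p ^ 2 + 1) := by linarith [hcard x, hcard (-x)]

theorem card_filter_dvd_le (hM : 0 < M) (hp : p.Prime) (hpM : ¬ p ∣ M) (a n : ℕ) :
    (#{u ∈ dyadicResidues M a n | p ∣ u} : ℝ) ≤ n / p + 1 := by
  have := NeZero.mk hp.ne_zero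
  simpa only [ZMod.natCast_eq_zero_iff] using
    card_filter_dyadicResidues_zmod_le hM (hp.coprime_iff_not_dvd.mpr hpM).symm 0 a n

theorem card_filter_product_le {α β : Type*} (s : Finset α) (t : Finset β) (r : α → β → Prop)
    [∀ x y, Decidable (r x y)] {C : ℝ} (h : ∀ y ∈ t, (#{x ∈ s | r x y} : ℝ) ≤ C) :
    (#{q ∈ s ×ˢ t | r q.1 q.2} : ℝ) ≤ #t * C := by
  rw [card_filter, sum_product_right]
  simp only [← card_filter, Nat.cast_sum]
  simpa using sum_le_card_nsmul t _ C h

/-- The pairs `(u, v)` of parameters, with `u ≡ a` and `v ≡ b` modulo `M`, of sizes about `M * I`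
and `M * J`. -/
def dyadicBox (M a b I J : ℕ) : Finset (ℕ × ℕ) := dyadicResidues M a I ×ˢ dyadicResidues M b J

theorem card_box_filter_sq_dvd_le (hM : 0 < M) (hp : p.Prime) (hp2 : p ≠ 2) (hpM : ¬ p ∣ M) :
    (#{q ∈ dyadicBox M a b I J | p ^ 2 ∣ q.1 ^ 2 + q.2 ^ 2} : ℝ) ≤
      (I / p + 1) * (J / p + 1) + J * (2 * (I / p ^ 2 + 1)) := by
  let U := dyadicResidues M a I
  let V := dyadicResidues M b J
  have hsub : {q ∈ dyadicBox M a b I J | p ^ 2 ∣ q.1 ^ 2 + q.2 ^ 2} ⊆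
      {u ∈ U | p ∣ u} ×ˢ {v ∈ V | p ∣ v} ∪
        {q ∈ U ×ˢ V | ¬ p ∣ q.2 ∧ p ^ 2 ∣ q.1 ^ 2 + q.2 ^ 2} := by
    intro q hq
    rw [mem_filter, dyadicBox, mem_product] at hq
    obtain ⟨⟨hu, hv⟩, hdvd⟩ := hq
    simp only [mem_union, mem_product, mem_filter]
    by_cases hpv : p ∣ q.2
    · have hpu : p ∣ q.1 := hp.dvd_of_dvd_pow <|
        (Nat.dvd_add_left (dvd_pow hpv two_ne_zero)).mp ((dvd_pow_self p two_ne_zero).trans hdvd)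
      exact .inl ⟨⟨hu, hpu⟩, hv, hpv⟩
    · exact .inr ⟨⟨hu, hv⟩, hpv, hdvd⟩
  have hfiber : ∀ v ∈ V, (#{u ∈ U | ¬ p ∣ v ∧ p ^ 2 ∣ u ^ 2 + v ^ 2} : ℝ) ≤
      2 * (I / p ^ 2 + 1) := fun v _ ↦ by
    by_cases hpv : p ∣ v
    · simp only [hpv, not_true, false_and, filter_false, card_empty, Nat.cast_zero]
      positivity
    · simpa only [hpv, not_false_iff, true_and] using
        card_filter_sq_dvd_sq_add_sq_le hM hp hp2 hpM hpv a I
  calc (#{q ∈ dyadicBox M a b I J | p ^ 2 ∣ q.1 ^ 2 + q.2 ^ 2} : ℝ)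
      ≤ #{u ∈ U | p ∣ u} * #{v ∈ V | p ∣ v} +
          #{q ∈ U ×ˢ V | ¬ p ∣ q.2 ∧ p ^ 2 ∣ q.1 ^ 2 + q.2 ^ 2} := by
        exact_mod_cast (card_le_card hsub).trans
          ((card_union_le _ _).trans_eq (by rw [card_product]))
    _ ≤ (I / p + 1) * (J / p + 1) + J * (2 * (I / p ^ 2 + 1)) := by
        gcongr
        · exact card_filter_dvd_le hM hp hpM a I
        · exact card_filter_dvd_le hM hp hpM b J
        · simpa [V, card_dyadicResidues hM] using card_filter_product_le U V _ hfiber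

theorem div_add_one_mul_div_add_one_le (hp : 0 < p) (hJ : 0 < J) :
    (I / p + 1) * (J / p + 1) + J * (2 * (I / p ^ 2 + 1)) ≤
      4 * I * J * ((p : ℝ) ^ 2)⁻¹ + (I / J + 4 * J) := by
  have hp' : (1 : ℝ) ≤ p := mod_cast hp
  have hJ' : (1 : ℝ) ≤ J := mod_cast hJ
  have hJp : (J : ℝ) / p ≤ J := div_le_self (by positivity) hp'
  have hIp : (I : ℝ) / p ≤ I * J / p ^ 2 + I / J := by
    have hamgm : (p : ℝ) * J ≤ J ^ 2 + p ^ 2 := by nlinarith [sq_nonneg ((p : ℝ) - J)]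
    calc (I : ℝ) / p = I * (p * J) / (p ^ 2 * J) := by field_simp
      _ ≤ I * (J ^ 2 + p ^ 2) / (p ^ 2 * J) := by gcongr
      _ = I * J / p ^ 2 + I / J := by field_simp
  calc (I / p + 1) * (J / p + 1) + J * (2 * (I / p ^ 2 + 1))
      = 3 * (I * J / p ^ 2) + I / p + J / p + 1 + 2 * (J : ℝ) := by
        field_simp
        ring
    _ ≤ 3 * (I * J / p ^ 2) + (I * J / p ^ 2 + I / J) + J + J + 2 * (J : ℝ) := by gcongr
    _ = 4 * I * J * ((p : ℝ) ^ 2)⁻¹ + (I / J + 4 * J) := by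
        rw [div_eq_mul_inv (I * J : ℝ) (p ^ 2)]
        ring

theorem card_box_filter_exists_small_prime_le (hM : 0 < M) (hJ : 0 < J) {k Y : ℕ} (hk : k ≠ 0)
    (hM2 : 2 ∣ M) :
    (#{q ∈ dyadicBox M a b I J |
        ∃ p ∈ Ioc k Y, p.Prime ∧ ¬ p ∣ M ∧ p ^ 2 ∣ q.1 ^ 2 + q.2 ^ 2} : ℝ) ≤
      4 * I * J / k + Y * (I / J + 4 * J) := by
  let P : Finset ℕ := {p ∈ Ioc k Y | p.Prime ∧ ¬ p ∣ M}
  let B (p : ℕ) : Finset (ℕ × ℕ) := {q ∈ dyadicBox M a b I J | p ^ 2 ∣ q.1 ^ 2 + q.2 ^ 2}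
  have hsub : {q ∈ dyadicBox M a b I J | ∃ p ∈ Ioc k Y, p.Prime ∧ ¬ p ∣ M ∧
      p ^ 2 ∣ q.1 ^ 2 + q.2 ^ 2} ⊆ P.biUnion B := by
    intro q hq
    obtain ⟨hq, p, hpk, hp, hpM, hdvd⟩ := mem_filter.mp hq
    exact mem_biUnion.mpr ⟨p, mem_filter.mpr ⟨hpk, hp, hpM⟩, mem_filter.mpr ⟨hq, hdvd⟩⟩
  have hB : ∀ p ∈ P, (#(B p) : ℝ) ≤ 4 * I * J * ((p : ℝ) ^ 2)⁻¹ + (I / J + 4 * J) := by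
    intro p hp
    obtain ⟨-, hp, hpM⟩ := mem_filter.mp hp
    have hp2 : p ≠ 2 := by rintro rfl; exact hpM hM2
    exact (card_box_filter_sq_dvd_le hM hp hp2 hpM).trans
      (div_add_one_mul_div_add_one_le hp.pos hJ)
  have hsum : ∑ p ∈ Ioc k Y, ((p : ℝ) ^ 2)⁻¹ ≤ (k : ℝ)⁻¹ := by
    rcases le_total k Y with h | h
    · exact (sum_Ioc_inv_sq_le_sub hk h).trans (sub_le_self _ (by positivity))
    · simp [Ioc_eq_empty_of_le h]
  calc (#{q ∈ dyadicBox M a b I J | ∃ p ∈ Ioc k Y, p.Prime ∧ ¬ p ∣ M ∧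
          p ^ 2 ∣ q.1 ^ 2 + q.2 ^ 2} : ℝ)
      ≤ ∑ p ∈ P, (#(B p) : ℝ) := mod_cast (card_le_card hsub).trans card_biUnion_le
    _ ≤ ∑ p ∈ P, (4 * I * J * ((p : ℝ) ^ 2)⁻¹ + (I / J + 4 * J)) := sum_le_sum hB
    _ ≤ ∑ p ∈ Ioc k Y, (4 * I * J * ((p : ℝ) ^ 2)⁻¹ + (I / J + 4 * J)) :=
        sum_le_sum_of_subset_of_nonneg (filter_subset _ _) fun _ _ _ ↦ by positivity
    _ = 4 * I * J * ∑ p ∈ Ioc k Y, ((p : ℝ) ^ 2)⁻¹ + (Y - k : ℕ) * (I / J + 4 * J) := by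
        rw [sum_add_distrib, mul_sum, sum_const, Nat.card_Ioc, nsmul_eq_mul]
    _ ≤ 4 * I * J * (k : ℝ)⁻¹ + Y * (I / J + 4 * J) := by
        gcongr
        exact Nat.sub_le Y k

theorem pos_of_mem_dyadicResidues (hM : 0 < M) {n u : ℕ} (hn : 0 < n)
    (hu : u ∈ dyadicResidues M a n) : 0 < u :=
  (Nat.mul_pos hM hn).trans_le (mem_dyadicResidues.mp hu).1.1

theorem eq_of_prime_sq_dvd_sq_add_sq (hp : p.Prime) (hp2 : p ≠ 2) {u v u' v' : ℕ}
    (huv : u.Coprime v) (huv' : u'.Coprime v') (h : p ^ 2 ∣ u ^ 2 + v ^ 2)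
    (h' : p ^ 2 ∣ u' ^ 2 + v' ^ 2) (hlt : u * v' + u' * v < p ^ 2) : u = u' ∧ v = v' := by
  have hp_int : Prime (p : ℤ) := Nat.prime_iff_prime_int.mp hp
  have hpu : ¬ p ∣ u := fun hu ↦ hp.not_dvd_one <| huv ▸ Nat.dvd_gcd hu <|
    hp.dvd_of_dvd_pow <| (Nat.dvd_add_right (dvd_pow hu two_ne_zero)).mp <|
      (dvd_pow_self p two_ne_zero).trans h
  have hpv' : ¬ p ∣ v' := fun hv ↦ hp.not_dvd_one <| huv' ▸ Nat.dvd_gcd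
    (hp.dvd_of_dvd_pow <| (Nat.dvd_add_left (dvd_pow hv two_ne_zero)).mp <|
      (dvd_pow_self p two_ne_zero).trans h') hv
  have hp2x : ¬ (p : ℤ) ∣ 2 * (u * v' : ℕ) := by
    rw [hp_int.dvd_mul, not_or, Int.natCast_dvd_natCast, hp.dvd_mul, not_or]
    exact ⟨mod_cast (Nat.prime_dvd_prime_iff_eq hp Nat.prime_two).not.mpr hp2, hpu, hpv'⟩
  have hdvd : (p : ℤ) ^ 2 ∣ ((u * v' : ℕ) : ℤ) ^ 2 - ((u' * v : ℕ) : ℤ) ^ 2 := by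
    have heq : ((u * v' : ℕ) : ℤ) ^ 2 - ((u' * v : ℕ) : ℤ) ^ 2 =
        v' ^ 2 * (u ^ 2 + v ^ 2 : ℕ) - v ^ 2 * (u' ^ 2 + v' ^ 2 : ℕ) := by
      push_cast
      ring
    rw [heq]
    exact dvd_sub ((mod_cast h : (p : ℤ) ^ 2 ∣ _).mul_left _)
      ((mod_cast h' : (p : ℤ) ^ 2 ∣ _).mul_left _)
  -- The bound on `p` turns `u v' ≡ ± u' v` modulo `p ^ 2` into proportionality of the two pairs.
  have heq : u * v' = u' * v := by
    rcases prime_sq_dvd_sub_or_dvd_add hp_int hp2x hdvd with hd | hd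
    · have := Int.eq_zero_of_abs_lt_dvd hd (by rw [abs_lt]; constructor <;> push_cast <;> lia)
      lia
    · have := Int.eq_zero_of_abs_lt_dvd hd (by rw [abs_lt]; constructor <;> push_cast <;> lia)
      lia
  constructor
  · exact Nat.dvd_antisymm (huv.dvd_of_dvd_mul_right (Dvd.intro v' heq))
      (huv'.dvd_of_dvd_mul_right (Dvd.intro v heq.symm))
  · exact Nat.dvd_antisymm (huv.symm.dvd_of_dvd_mul_left (Dvd.intro_left u' heq.symm))
      (huv'.symm.dvd_of_dvd_mul_left (Dvd.intro_left u heq))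

theorem sq_add_sq_le_of_mem_dyadicBox (hJI : J ≤ I) {q : ℕ × ℕ} (hq : q ∈ dyadicBox M a b I J) :
    q.1 ^ 2 + q.2 ^ 2 ≤ 8 * M ^ 2 * I ^ 2 := by
  obtain ⟨hu, hv⟩ := mem_product.mp hq
  calc q.1 ^ 2 + q.2 ^ 2 ≤ (2 * (M * I)) ^ 2 + (2 * (M * I)) ^ 2 := by
        gcongr
        · exact (mem_dyadicResidues.mp hu).1.2.le
        · exact (mem_dyadicResidues.mp hv).1.2.le.trans (by gcongr)
    _ = 8 * M ^ 2 * I ^ 2 := by ring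

open Classical in
theorem card_box_filter_exists_large_prime_le (hM : 0 < M) (hJ : 0 < J) (hJI : J ≤ I) {Y : ℕ}
    (hY2 : 2 ≤ Y) (hY : 8 * M ^ 2 * I * J ≤ Y ^ 2) :
    #{q ∈ dyadicBox M a b I J |
        q.1.Coprime q.2 ∧ ∃ p, p.Prime ∧ Y < p ∧ p ^ 2 ∣ q.1 ^ 2 + q.2 ^ 2} ≤ 3 * M * I := by
  let B (p : ℕ) : Finset (ℕ × ℕ) :=
    {q ∈ dyadicBox M a b I J | q.1.Coprime q.2 ∧ p.Prime ∧ Y < p ∧ p ^ 2 ∣ q.1 ^ 2 + q.2 ^ 2}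
  have hsub : {q ∈ dyadicBox M a b I J | q.1.Coprime q.2 ∧
      ∃ p, p.Prime ∧ Y < p ∧ p ^ 2 ∣ q.1 ^ 2 + q.2 ^ 2} ⊆ (Ioc 0 (3 * M * I)).biUnion B := by
    intro q hq
    obtain ⟨hq, hcop, p, hp, hYp, hdvd⟩ := mem_filter.mp hq
    have hS : 0 < q.1 ^ 2 + q.2 ^ 2 :=
      Nat.add_pos_right _ (pow_pos (pos_of_mem_dyadicResidues hM hJ (mem_product.mp hq).2) 2)
    have hple : p ≤ 3 * M * I := (Nat.pow_le_pow_iff_left two_ne_zero).mp <| calc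
      p ^ 2 ≤ q.1 ^ 2 + q.2 ^ 2 := Nat.le_of_dvd hS hdvd
      _ ≤ 8 * M ^ 2 * I ^ 2 := sq_add_sq_le_of_mem_dyadicBox hJI hq
      _ ≤ 9 * M ^ 2 * I ^ 2 := by gcongr; norm_num
      _ = (3 * M * I) ^ 2 := by ring
    exact mem_biUnion.mpr ⟨p, mem_Ioc.mpr ⟨hp.pos, hple⟩,
      mem_filter.mpr ⟨hq, hcop, hp, hYp, hdvd⟩⟩
  have hB : ∀ p ∈ Ioc 0 (3 * M * I), #(B p) ≤ 1 := fun p _ ↦ by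
    refine card_le_one.mpr fun q hq r hr ↦ ?_
    obtain ⟨hq, hqcop, hp, hYp, hqdvd⟩ := mem_filter.mp hq
    obtain ⟨hr, hrcop, -, -, hrdvd⟩ := mem_filter.mp hr
    obtain ⟨hqU, hqV⟩ := mem_product.mp hq
    obtain ⟨hrU, hrV⟩ := mem_product.mp hr
    have hlt : q.1 * r.2 + r.1 * q.2 < p ^ 2 := by
      calc q.1 * r.2 + r.1 * q.2
          ≤ (2 * (M * I)) * (2 * (M * J)) + (2 * (M * I)) * (2 * (M * J)) := by
            gcongr <;> exact (mem_dyadicResidues.mp ‹_›).1.2.le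
        _ = 8 * M ^ 2 * I * J := by ring
        _ ≤ Y ^ 2 := hY
        _ < p ^ 2 := by gcongr
    have := eq_of_prime_sq_dvd_sq_add_sq hp (by lia) hqcop hrcop hqdvd hrdvd hlt
    exact Prod.ext this.1 this.2
  calc _ ≤ #((Ioc 0 (3 * M * I)).biUnion B) := card_le_card hsub
    _ ≤ #(Ioc 0 (3 * M * I)) * 1 := card_biUnion_le_card_mul _ _ _ hB
    _ = 3 * M * I := by simp

theorem exists_small_or_large_prime_of_not_squarefree (hM : 0 < M) (hJ : 0 < J) {k Y : ℕ}
    (hk : ∀ p, p.Prime → p ≤ k → p ∣ M) (hY : 2 * (M * J) ≤ Y) {q : ℕ × ℕ}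
    (hq : q ∈ dyadicBox M a b I J)
    (hlocal : ∀ p, p.Prime → p ∣ M → ¬ p ^ 2 ∣ q.1 ^ 2 + q.2 ^ 2)
    (hsq : ¬ Squarefree (q.1 ^ 2 + q.2 ^ 2)) :
    (∃ p ∈ Ioc k Y, p.Prime ∧ ¬ p ∣ M ∧ p ^ 2 ∣ q.1 ^ 2 + q.2 ^ 2) ∨
      q.1.Coprime q.2 ∧ ∃ p, p.Prime ∧ Y < p ∧ p ^ 2 ∣ q.1 ^ 2 + q.2 ^ 2 := by
  have small {p : ℕ} (hp : p.Prime) (hpY : p ≤ Y) (hdvd : p ^ 2 ∣ q.1 ^ 2 + q.2 ^ 2) :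
      ∃ p ∈ Ioc k Y, p.Prime ∧ ¬ p ∣ M ∧ p ^ 2 ∣ q.1 ^ 2 + q.2 ^ 2 := by
    have hpM : ¬ p ∣ M := fun h ↦ hlocal p hp h hdvd
    exact ⟨p, mem_Ioc.mpr ⟨not_le.mp fun h ↦ hpM (hk p hp h), hpY⟩, hp, hpM, hdvd⟩
  by_cases hcop : q.1.Coprime q.2
  · simp only [Nat.squarefree_iff_prime_squarefree, not_forall, not_not, ← sq] at hsq
    obtain ⟨p, hp, hdvd⟩ := hsq
    exact (le_or_gt p Y).imp (small hp · hdvd) fun h ↦ ⟨hcop, p, hp, h, hdvd⟩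
  · obtain ⟨r, hr, hru, hrv⟩ := Nat.Prime.not_coprime_iff_dvd.mp hcop
    have hv := (mem_product.mp hq).2
    have hrY : r ≤ Y := (Nat.le_of_dvd (pos_of_mem_dyadicResidues hM hJ hv) hrv).trans
      ((mem_dyadicResidues.mp hv).1.2.le.trans hY)
    exact .inl (small hr hrY (dvd_add (pow_dvd_pow_of_dvd hru 2) (pow_dvd_pow_of_dvd hrv 2)))

theorem sub_lt_of_sq_add_sq_eq {H u v x y : ℕ} (hH : 2 * M * J ^ 2 ≤ I * H)
    (hx : M * I ≤ x) (hy : y < 2 * (M * J)) (hlt : x < u) (h : x ^ 2 + y ^ 2 = u ^ 2 + v ^ 2) :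
    u - x < H := by
  obtain ⟨t, rfl⟩ := Nat.exists_eq_add_of_lt hlt
  rw [add_assoc, Nat.add_sub_cancel_left]
  refine Nat.lt_of_mul_lt_mul_left (a := 2 * M * I) ?_
  calc 2 * M * I * (t + 1) = (M * I + M * I) * (t + 1) := by ring
    _ ≤ (x + x) * (t + 1) := by gcongr
    _ ≤ y ^ 2 := by nlinarith
    _ < (2 * (M * J)) ^ 2 := by gcongr
    _ = 2 * M * (2 * M * J ^ 2) := by ring
    _ ≤ 2 * M * (I * H) := by gcongr
    _ = 2 * M * I * H := by ring

theorem eq_of_sq_add_sq_eq_of_sub_eq {u x u' x' v y : ℕ} (hlt : x < u) (hlt' : x' < u')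
    (h : x ^ 2 + y ^ 2 = u ^ 2 + v ^ 2) (h' : x' ^ 2 + y ^ 2 = u' ^ 2 + v ^ 2)
    (hsub : u - x = u' - x') : u = u' := by
  obtain ⟨t, rfl⟩ := Nat.exists_eq_add_of_lt hlt
  obtain rfl : u' = x' + t + 1 := by lia
  have : x * (t + 1) = x' * (t + 1) := by lia
  rw [Nat.eq_of_mul_eq_mul_right t.succ_pos this]

theorem card_box_filter_collision_le (hM : 0 < M) {H : ℕ} (hH : 2 * M * J ^ 2 ≤ I * H) :
    #{q ∈ dyadicBox M a b I J | ∃ r ∈ dyadicBox M a b I J, r.1 < q.1 ∧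
        r.1 ^ 2 + r.2 ^ 2 = q.1 ^ 2 + q.2 ^ 2} ≤ J ^ 2 * H := by
  set C : Finset (ℕ × ℕ) := {q ∈ dyadicBox M a b I J | ∃ r ∈ dyadicBox M a b I J, r.1 < q.1 ∧
    r.1 ^ 2 + r.2 ^ 2 = q.1 ^ 2 + q.2 ^ 2}
  have hC : ∀ q ∈ C, ∃ r ∈ dyadicBox M a b I J, r.1 < q.1 ∧
      r.1 ^ 2 + r.2 ^ 2 = q.1 ^ 2 + q.2 ^ 2 := fun q hq ↦ (mem_filter.mp hq).2
  choose! r hr hlt heq using hC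
  let V := dyadicResidues M b J
  have hmaps : ∀ q ∈ C, (q.2, (r q).2, q.1 - (r q).1) ∈ V ×ˢ V ×ˢ range H := by
    intro q hq
    obtain ⟨-, hqV⟩ := mem_product.mp (mem_filter.mp hq).1
    obtain ⟨hrU, hrV⟩ := mem_product.mp (hr q hq)
    refine mem_product.mpr ⟨hqV, mem_product.mpr ⟨hrV, mem_range.mpr ?_⟩⟩
    exact sub_lt_of_sq_add_sq_eq hH (mem_dyadicResidues.mp hrU).1.1
      (mem_dyadicResidues.mp hrV).1.2 (hlt q hq) (heq q hq)
  have hinj : Set.InjOn (fun q ↦ (q.2, (r q).2, q.1 - (r q).1)) C := by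
    intro q hq q' hq' h
    simp only [Prod.mk.injEq] at h
    obtain ⟨hv, hy, hsub⟩ := h
    have heq' := heq q' hq'
    rw [← hv, ← hy] at heq'
    exact Prod.ext (eq_of_sq_add_sq_eq_of_sub_eq (hlt q hq) (hlt q' hq') (heq q hq) heq' hsub) hv
  calc #C ≤ #(V ×ˢ V ×ˢ range H) := card_le_card_of_injOn _ hmaps hinj
    _ = J ^ 2 * H := by simp [V, card_dyadicResidues hM, sq, mul_assoc]

open Classical in
theorem card_box_sub_le_card_filter_squarefree (hM : 0 < M) (hM2 : 2 ∣ M) (hJ : 0 < J)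
    (hJI : J ≤ I) {k Y : ℕ} (hk0 : k ≠ 0) (hk : ∀ p, p.Prime → p ≤ k → p ∣ M)
    (hlocal : ∀ u v p, u ≡ a [MOD M] → v ≡ b [MOD M] → p.Prime → p ∣ M → ¬ p ^ 2 ∣ u ^ 2 + v ^ 2)
    (hY2 : 2 ≤ Y) (hYJ : 2 * (M * J) ≤ Y) (hY : 8 * M ^ 2 * I * J ≤ Y ^ 2) :
    (I * J : ℝ) - (4 * I * J / k + Y * (I / J + 4 * J)) - 3 * M * I ≤
      #{q ∈ dyadicBox M a b I J | Squarefree (q.1 ^ 2 + q.2 ^ 2)} := by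
  let B := dyadicBox M a b I J
  let Small : Finset (ℕ × ℕ) :=
    {q ∈ B | ∃ p ∈ Ioc k Y, p.Prime ∧ ¬ p ∣ M ∧ p ^ 2 ∣ q.1 ^ 2 + q.2 ^ 2}
  let Large : Finset (ℕ × ℕ) :=
    {q ∈ B | q.1.Coprime q.2 ∧ ∃ p, p.Prime ∧ Y < p ∧ p ^ 2 ∣ q.1 ^ 2 + q.2 ^ 2}
  have hsub : B ⊆ {q ∈ B | Squarefree (q.1 ^ 2 + q.2 ^ 2)} ∪ (Small ∪ Large) := by
    intro q hq
    simp only [mem_union, Small, Large, mem_filter, hq, true_and]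
    refine or_iff_not_imp_left.mpr
      (exists_small_or_large_prime_of_not_squarefree hM hJ hk hYJ hq fun p ↦ ?_)
    obtain ⟨hu, hv⟩ := mem_product.mp hq
    exact hlocal q.1 q.2 p (mem_dyadicResidues.mp hu).2 (mem_dyadicResidues.mp hv).2
  have hcard : (#B : ℝ) ≤ #{q ∈ B | Squarefree (q.1 ^ 2 + q.2 ^ 2)} + (#Small + #Large) := by
    exact_mod_cast (card_le_card hsub).trans
      ((card_union_le _ _).trans (Nat.add_le_add_left (card_union_le _ _) _))
  have hB : (#B : ℝ) = I * J := by
    simp only [B, dyadicBox, card_product, card_dyadicResidues hM, Nat.cast_mul]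
  have hSmall : (#Small : ℝ) ≤ _ := card_box_filter_exists_small_prime_le hM hJ hk0 hM2
  have hLarge : (#Large : ℝ) ≤ 3 * M * I :=
    mod_cast card_box_filter_exists_large_prime_le hM hJ hJI hY2 hY
  linarith

theorem card_le_card_image_sq_add_sq (hM : 0 < M) {H : ℕ} (hH : 2 * M * J ^ 2 ≤ I * H)
    {Q : Finset (ℕ × ℕ)} (hQ : Q ⊆ dyadicBox M a b I J) :
    #Q ≤ #(Q.image fun q ↦ q.1 ^ 2 + q.2 ^ 2) + J ^ 2 * H := by
  let C : Finset (ℕ × ℕ) := {q ∈ dyadicBox M a b I J | ∃ r ∈ dyadicBox M a b I J, r.1 < q.1 ∧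
    r.1 ^ 2 + r.2 ^ 2 = q.1 ^ 2 + q.2 ^ 2}
  have hnotlt {q r : ℕ × ℕ} (hq : q ∈ Q \ C) (hr : r ∈ Q \ C)
      (h : r.1 ^ 2 + r.2 ^ 2 = q.1 ^ 2 + q.2 ^ 2) : ¬ r.1 < q.1 := fun hlt ↦
    (mem_sdiff.mp hq).2 <|
      mem_filter.mpr ⟨hQ (mem_sdiff.mp hq).1, r, hQ (mem_sdiff.mp hr).1, hlt, h⟩
  have hinj : Set.InjOn (fun q : ℕ × ℕ ↦ q.1 ^ 2 + q.2 ^ 2) ↑(Q \ C) := fun q hq r hr h ↦ by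
    have hfst : q.1 = r.1 := le_antisymm (not_lt.mp (hnotlt hq hr h.symm))
      (not_lt.mp (hnotlt hr hq h))
    have hsnd : q.2 ^ 2 = r.2 ^ 2 := by simpa only [hfst, add_right_inj] using h
    exact Prod.ext hfst (Nat.pow_left_injective two_ne_zero hsnd)
  calc #Q ≤ #(Q \ C) + #C := card_le_card_sdiff_add_card
    _ = #((Q \ C).image fun q ↦ q.1 ^ 2 + q.2 ^ 2) + #C := by rw [card_image_of_injOn hinj]
    _ ≤ #(Q.image fun q ↦ q.1 ^ 2 + q.2 ^ 2) + J ^ 2 * H := by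
      gcongr
      · exact sdiff_subset
      · exact card_box_filter_collision_le hM hH

/-- The squarefree values of `u² + v²` on the box of parameters `(u, v)`, each counted once. -/
def squarefreeSums (M a b I J : ℕ) : Finset ℕ :=
  {q ∈ dyadicBox M a b I J | Squarefree (q.1 ^ 2 + q.2 ^ 2)}.image fun q ↦ q.1 ^ 2 + q.2 ^ 2

theorem exists_of_mem_squarefreeSums (hJI : J ≤ I) {S : ℕ} (hS : S ∈ squarefreeSums M a b I J) :
    Squarefree S ∧ S ≤ 8 * M ^ 2 * I ^ 2 ∧
      ∃ u v, u ≡ a [MOD M] ∧ v ≡ b [MOD M] ∧ S = u ^ 2 + v ^ 2 := by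
  obtain ⟨q, hq, rfl⟩ := mem_image.mp hS
  obtain ⟨hq, hsq⟩ := mem_filter.mp hq
  obtain ⟨hu, hv⟩ := mem_product.mp hq
  exact ⟨hsq, sq_add_sq_le_of_mem_dyadicBox hJI hq, q.1, q.2, (mem_dyadicResidues.mp hu).2,
    (mem_dyadicResidues.mp hv).2, rfl⟩

theorem sieve_loss_le {x m : ℝ} (hx : 0 ≤ x) (hm : 1 ≤ m) (hxm : 72 * x ≤ m) :
    3 * x * m ^ 8 * (m ^ 10 / m ^ 6 + 4 * m ^ 6) + 3 * x * m ^ 10 +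
      (m ^ 6) ^ 2 * (2 * x * m ^ 2) ≤ 3 / 10 * m ^ 16 := by
  calc 3 * x * m ^ 8 * (m ^ 10 / m ^ 6 + 4 * m ^ 6) + 3 * x * m ^ 10 +
        (m ^ 6) ^ 2 * (2 * x * m ^ 2)
      = 3 * x * m ^ 12 + 14 * x * m ^ 14 + 3 * x * m ^ 10 := by
        field_simp
        ring
    _ ≤ 3 * x * m ^ 14 + 14 * x * m ^ 14 + 3 * x * m ^ 14 := by gcongr <;> norm_num
    _ = 20 * x * m ^ 14 := by ring
    _ ≤ 3 / 10 * m * m ^ 14 := mul_le_mul_of_nonneg_right (by linarith) (by positivity)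
    _ = 3 / 10 * m ^ 15 := by ring
    _ ≤ 3 / 10 * m ^ 16 := by
        gcongr
        norm_num

theorem pow_sixteen_le_two_mul_card_squarefreeSums (hk : ∀ p, p.Prime → p ≤ 20 → p ∣ M)
    (hlocal : ∀ u v p, u ≡ a [MOD M] → v ≡ b [MOD M] → p.Prime → p ∣ M → ¬ p ^ 2 ∣ u ^ 2 + v ^ 2)
    {m : ℕ} (hM : 0 < M) (hm : 72 * M ≤ m) :
    m ^ 16 ≤ 2 * #(squarefreeSums M a b (m ^ 10) (m ^ 6)) := by
  have hm0 : 0 < m := by lia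
  have hYJ : 2 * (M * m ^ 6) ≤ 3 * M * m ^ 8 := by
    calc 2 * (M * m ^ 6) ≤ 3 * (M * m ^ 8) := by gcongr <;> lia
      _ = 3 * M * m ^ 8 := by ring
  have hsquarefree := card_box_sub_le_card_filter_squarefree (a := a) (b := b) (I := m ^ 10)
    (J := m ^ 6) (Y := 3 * M * m ^ 8) hM (hk 2 Nat.prime_two (by norm_num)) (by positivity)
    (Nat.pow_le_pow_right hm0 (by norm_num)) (k := 20) (by norm_num) hk hlocal
    (by nlinarith [pow_pos hm0 8]) hYJ (by nlinarith [sq_nonneg (M * m ^ 8)])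
  have hcollision := card_le_card_image_sq_add_sq (a := a) (b := b) (I := m ^ 10) (J := m ^ 6)
    (H := 2 * M * m ^ 2) hM (by ring_nf; rfl)
    (filter_subset (fun q ↦ Squarefree (q.1 ^ 2 + q.2 ^ 2)) _)
  have hloss := sieve_loss_le (x := M) (m := m) (by positivity) (mod_cast hm0)
    (mod_cast hm)
  rw [← squarefreeSums] at hcollision
  have hcollision' := (Nat.cast_le (α := ℝ)).mpr hcollision
  push_cast at hsquarefree hcollision'
  rify
  linarith

end Sieve

section Counting

open Finset

theorem card_divisors_of_squarefree {n : ℕ} (hn : Squarefree n) :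
    #n.divisors = 2 ^ #n.primeFactors := by
  rw [Nat.card_divisors hn.ne_zero, ← prod_const]
  exact prod_congr rfl fun p hp ↦ by
    rw [Nat.factorization_eq_one_of_squarefree hn (Nat.prime_of_mem_primeFactors hp)
      (Nat.dvd_of_mem_primeFactors hp)]

theorem exists_card_divisors_pow_le (k : ℕ) :
    ∃ C : ℕ, 0 < C ∧ ∀ n : ℕ, Squarefree n → #n.divisors ^ k ≤ C * n := by
  refine ⟨(2 ^ k) ^ 2 ^ k, by positivity, fun n hn ↦ ?_⟩
  have hsmall : #{p ∈ n.primeFactors | p < 2 ^ k} ≤ 2 ^ k := by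
    simpa using card_le_card fun p (hp : p ∈ {p ∈ n.primeFactors | p < 2 ^ k}) ↦
      mem_range.mpr (mem_filter.mp hp).2
  have hlarge : (2 ^ k) ^ #{p ∈ n.primeFactors | ¬ p < 2 ^ k} ≤ n := by
    calc (2 ^ k) ^ #{p ∈ n.primeFactors | ¬ p < 2 ^ k}
        ≤ ∏ p ∈ n.primeFactors with ¬ p < 2 ^ k, p :=
          pow_card_le_prod _ _ _ fun p hp ↦ not_lt.mp (mem_filter.mp hp).2
      _ ≤ ∏ p ∈ n.primeFactors, p :=
          prod_le_prod_of_subset_of_one_le' (filter_subset _ _) fun p hp _ ↦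
            (Nat.prime_of_mem_primeFactors hp).one_le
      _ = n := Nat.prod_primeFactors_of_squarefree hn
  calc #n.divisors ^ k = (2 ^ k) ^ #n.primeFactors := by
        rw [card_divisors_of_squarefree hn, pow_right_comm]
    _ = (2 ^ k) ^ #{p ∈ n.primeFactors | p < 2 ^ k} *
          (2 ^ k) ^ #{p ∈ n.primeFactors | ¬ p < 2 ^ k} := by
        rw [← pow_add, card_filter_add_card_filter_not]
    _ ≤ (2 ^ k) ^ 2 ^ k * n := by
        gcongr
        exact Nat.one_le_two_pow

theorem card_le_mul_ncard_of_dvd {T : Finset ℕ} {D : Set ℤ} (hD : D.Finite) {n : ℕ}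
    (h : ∀ S ∈ T, ∃ d ∈ D, d ≠ 0 ∧ (S : ℤ) ∣ d ∧ #d.natAbs.divisors ≤ n) :
    #T ≤ D.ncard * n := by
  choose! f hfD hf0 hfdvd hfn using h
  have hsub : T ⊆ (T.image f).biUnion fun d ↦ d.natAbs.divisors := fun S hS ↦
    mem_biUnion.mpr ⟨f S, mem_image_of_mem f hS,
      Nat.mem_divisors.mpr ⟨Int.natCast_dvd.mp (hfdvd S hS), Int.natAbs_ne_zero.mpr (hf0 S hS)⟩⟩
  have himage : #(T.image f) ≤ D.ncard := by
    rw [← Set.ncard_coe_finset]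
    refine Set.ncard_le_ncard ?_ hD
    simpa [Set.subset_def] using hfD
  calc #T ≤ #(T.image f) * n :=
        (card_le_card hsub).trans (card_biUnion_le_card_mul _ _ _ (forall_mem_image.mpr hfn))
    _ ≤ D.ncard * n := by gcongr

theorem exists_mul_rpow_le_of_pow_le {f : ℝ → ℝ} (hf : Monotone f) {A B : ℝ} (hA : 0 < A)
    (hB : 0 < B) {i j m₀ : ℕ} (hj : j ≠ 0)
    (h : ∀ m : ℕ, m₀ ≤ m → (m : ℝ) ^ i ≤ B * f (A * m ^ j)) :
    ∃ c : ℝ, 0 < c ∧ ∃ X₀ : ℝ, ∀ X : ℝ, X₀ ≤ X → c * X ^ ((i : ℝ) / j) ≤ f X := by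
  refine ⟨(A ^ ((i : ℝ) / j) * (2 ^ i * B))⁻¹, by positivity, A * (m₀ + 1) ^ j, fun X hX ↦ ?_⟩
  have hXA : (m₀ + 1 : ℝ) ^ j ≤ X / A := (le_div_iff₀' hA).mpr hX
  have hXA0 : 0 ≤ X / A := (by positivity : (0 : ℝ) ≤ (m₀ + 1) ^ j).trans hXA
  let t : ℝ := (X / A) ^ (j : ℝ)⁻¹
  have ht : A * t ^ j = X := by
    rw [Real.rpow_inv_natCast_pow hXA0 hj, mul_div_cancel₀ X hA.ne']
  have ht0 : 0 ≤ t := Real.rpow_nonneg hXA0 _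
  have hm₀t : (m₀ + 1 : ℝ) ≤ t :=
    le_of_pow_le_pow_left₀ hj ht0 (by rwa [Real.rpow_inv_natCast_pow hXA0 hj])
  have hfloor : t ≤ 2 * ⌊t⌋₊ := by
    have h₁ : (1 : ℝ) ≤ ⌊t⌋₊ :=
      mod_cast Nat.le_floor (by push_cast; linarith [(m₀.cast_nonneg : (0 : ℝ) ≤ m₀)])
    linarith [Nat.lt_floor_add_one t]
  have hXpow : X ^ ((i : ℝ) / j) = A ^ ((i : ℝ) / j) * t ^ i := by
    rw [← mul_div_cancel₀ X hA.ne', Real.mul_rpow hA.le hXA0, div_eq_inv_mul (i : ℝ),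
      Real.rpow_mul hXA0, Real.rpow_natCast]
  rw [inv_mul_le_iff₀ (by positivity), hXpow, mul_assoc]
  gcongr
  calc t ^ i ≤ (2 * ⌊t⌋₊) ^ i := by gcongr
    _ = 2 ^ i * (⌊t⌋₊ : ℝ) ^ i := mul_pow _ _ _
    _ ≤ 2 ^ i * (B * f (A * ⌊t⌋₊ ^ j)) := by
        gcongr
        exact h _ (Nat.le_floor (by linarith))
    _ ≤ 2 ^ i * (B * f (A * t ^ j)) := by
        gcongr
        apply hf
        gcongr
        exact Nat.floor_le ht0
    _ = 2 ^ i * B * f X := by rw [ht, mul_assoc]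

theorem dvd_familyModulus_of_prime_of_le {p : ℕ} (hp : p.Prime) (hp20 : p ≤ 20) :
    p ∣ familyModulus := by
  interval_cases p <;> revert hp <;> norm_num [familyModulus]

theorem not_prime_sq_dvd_sq_add_sq {u v p : ℕ} (hu : u ≡ 1 [MOD familyModulus])
    (hv : v ≡ familyResidue [MOD familyModulus]) (hp : p.Prime) (hpM : p ∣ familyModulus) :
    ¬ p ^ 2 ∣ u ^ 2 + v ^ 2 := by
  intro hdvd
  have hmod : u ^ 2 + v ^ 2 ≡ 1 ^ 2 + familyResidue ^ 2 [MOD p] :=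
    ((hu.pow 2).add (hv.pow 2)).of_dvd hpM
  have hp_res : p ∣ 1 ^ 2 + familyResidue ^ 2 :=
    (hmod.dvd_iff dvd_rfl).mp ((dvd_pow_self p two_ne_zero).trans hdvd)
  have hgcd : Nat.gcd familyModulus (1 ^ 2 + familyResidue ^ 2) = 2 := by
    norm_num [familyModulus, familyResidue]
  obtain rfl : p = 2 := (Nat.prime_dvd_prime_iff_eq hp Nat.prime_two).mp
    (hgcd ▸ Nat.dvd_gcd hpM hp_res)
  have odd_of_modEq {x r : ℕ} (hx : x ≡ r [MOD familyModulus]) (hr : Odd r) : Odd x :=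
    Nat.odd_iff.mpr (Eq.trans (hx.of_dvd hpM) (Nat.odd_iff.mp hr))
  obtain ⟨s, rfl⟩ := odd_of_modEq hu odd_one
  obtain ⟨t, rfl⟩ := odd_of_modEq hv (by decide)
  have hsum : (2 * s + 1) ^ 2 + (2 * t + 1) ^ 2 = 2 ^ 2 * (s ^ 2 + s + t ^ 2 + t) + 2 := by ring
  rw [hsum, Nat.dvd_add_right (dvd_mul_right _ _)] at hdvd
  norm_num at hdvd

theorem exists_goodRank5sq_of_mem_squarefreeSums {I J S : ℕ} (hJI : J ≤ I)
    (hS : S ∈ squarefreeSums familyModulus 1 familyResidue I J) :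
    ∃ d : ℤ, GoodRank5sq (4 * d.natAbs) d ∧
      d.natAbs ≤ 216973312 * (8 * familyModulus ^ 2 * I ^ 2) ^ 3 ∧ (S : ℤ) ∣ d := by
  obtain ⟨hsq, hSle, u, v, hu, hv, rfl⟩ := exists_of_mem_squarefreeSums hJI hS
  obtain ⟨d, hd, hdle, hSd⟩ := exists_goodRank5sq (Int.natCast_modEq_iff.mpr hu)
    (Int.natCast_modEq_iff.mpr hv) (mod_cast Int.squarefree_natCast.mpr hsq)
  refine ⟨d, by simpa using hd, ?_, mod_cast hSd⟩
  calc d.natAbs ≤ 216973312 * (u ^ 2 + v ^ 2) ^ 3 := by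
        zify
        exact hdle
    _ ≤ 216973312 * (8 * familyModulus ^ 2 * I ^ 2) ^ 3 := by gcongr

theorem exists_pow_fifteen_le_mul_ncard :
    ∃ B : ℕ, 0 < B ∧ ∃ A : ℕ, 0 < A ∧ ∀ m : ℕ, 72 * familyModulus ≤ m →
      m ^ 15 ≤ B * {d : ℤ | GoodRank5sq (A * (m : ℝ) ^ 60) d}.ncard := by
  obtain ⟨C, hC, hdiv⟩ := exists_card_divisors_pow_le 60
  have hM : 0 < familyModulus := by norm_num [familyModulus]
  let A := 4 * (216973312 * (8 * familyModulus ^ 2) ^ 3)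
  have hA : 0 < A := by positivity
  refine ⟨2 * (C * A), by positivity, A, hA, fun m hm ↦ ?_⟩
  let D : Set ℤ := {d | GoodRank5sq (A * (m : ℝ) ^ 60) d}
  have hm0 : 0 < m := by lia
  have hm_pow : m ^ 6 ≤ m ^ 10 := Nat.pow_le_pow_right hm0 (by norm_num)
  have hdvd : ∀ S ∈ squarefreeSums familyModulus 1 familyResidue (m ^ 10) (m ^ 6),
      ∃ d ∈ D, d ≠ 0 ∧ (S : ℤ) ∣ d ∧ #d.natAbs.divisors ≤ C * A * m := by
    intro S hS
    obtain ⟨d, hd, hdle, hSd⟩ := exists_goodRank5sq_of_mem_squarefreeSums hm_pow hS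
    have hdA : 4 * d.natAbs ≤ A * m ^ 60 := by
      calc 4 * d.natAbs ≤ 4 * (216973312 * (8 * familyModulus ^ 2 * (m ^ 10) ^ 2) ^ 3) := by gcongr
        _ = A * m ^ 60 := by ring
    refine ⟨d, hd.mono (mod_cast hdA), hd.1.ne, hSd, (Nat.pow_le_pow_iff_left (n := 60) ?_).mp ?_⟩
    · norm_num
    · calc #d.natAbs.divisors ^ 60 ≤ C * d.natAbs := hdiv _ (Int.squarefree_natAbs.mpr hd.2.1)
        _ ≤ C * A * m ^ 60 := by
          rw [mul_assoc]
          gcongr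
          lia
        _ ≤ (C * A) ^ 60 * m ^ 60 := by
          gcongr
          exact Nat.le_self_pow (by norm_num) _
        _ = (C * A * m) ^ 60 := (mul_pow _ _ _).symm
  refine Nat.le_of_mul_le_mul_left (c := m) ?_ hm0
  calc m * m ^ 15 = m ^ 16 := by ring
    _ ≤ 2 * #(squarefreeSums familyModulus 1 familyResidue (m ^ 10) (m ^ 6)) :=
        pow_sixteen_le_two_mul_card_squarefreeSums
          (fun _ ↦ dvd_familyModulus_of_prime_of_le) (fun _ _ _ ↦ not_prime_sq_dvd_sq_add_sq) hM hm
    _ ≤ 2 * (D.ncard * (C * A * m)) := by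
        gcongr
        exact card_le_mul_ncard_of_dvd (finite_setOf_goodRank5sq _) hdvd
    _ = m * (2 * (C * A) * D.ncard) := by ring

end Counting

/-- Byeon: there are `≫ X^(1/4)` imaginary quadratic fields with `|d_k| ≤ X`
whose ideal class group has 5-rank at least 2. -/
theorem count_imag_quad_5rank_two_quarter :
    ∃ c : ℝ, 0 < c ∧ ∃ X₀ : ℝ, ∀ X : ℝ, X₀ ≤ X →
      c * X ^ ((1 : ℝ) / 4) ≤ ({d : ℤ | GoodRank5sq X d}.ncard : ℝ) := by
  obtain ⟨B, hB, A, hA, h⟩ := exists_pow_fifteen_le_mul_ncard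
  have hmono : Monotone fun X : ℝ ↦ ({d : ℤ | GoodRank5sq X d}.ncard : ℝ) := fun X Y hXY ↦
    Nat.cast_le.mpr <| Set.ncard_le_ncard (fun _ ↦ GoodRank5sq.mono hXY)
      (finite_setOf_goodRank5sq Y)
  have hgrowth := exists_mul_rpow_le_of_pow_le hmono (A := A) (B := B) (i := 15) (j := 60)
    (mod_cast hA) (mod_cast hB) (by norm_num) fun m hm ↦ mod_cast h m hm
  have hexp : ((15 : ℕ) : ℝ) / (60 : ℕ) = 1 / 4 := by norm_num
  rwa [hexp] at hgrowth
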